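/- arXiv:1610.00503 — 7 statements merged into one kernel-verified Lean document; each statement's English description precedes it below -/
import Mathlib

section
/- Decomposition lemma on ℝ^d (Lemma 3.2): Let d ≥ 1 be an integer and let p be a real number with p > d. There exists a constant C > 0, depending only on d and p, such that for every smooth compactly supported function Φ : ℝ^d → ℝ and every λ > 0 there exist smooth compactly supported functions Φ₁, Φ₂ : ℝ^d → ℝ with Φ = Φ₁ + Φ₂ on ℝ^d, satisfying: (i) ‖Φ₁‖_{L^∞(ℝ^d)} ≤ C λ^{1 − d/p} ‖∇Φ‖_{L^p(ℝ^d)}; (ii) ‖Φ₂‖_{L^∞(ℝ^d)} ≤ C λ^{−d/p} ‖Φ‖_{L^p(ℝ^d)}; (iii) ‖∇Φ₂‖_{L^∞(ℝ^d)} ≤ C λ^{−d/p} ‖∇Φ‖_{L^p(ℝ^d)}. Moreover, if Φ is supported in the closed ball of radius R centered at the origin, then Φ₁ and Φ₂ can be chosen supported in the closed ball of radius R + λ centered at the origin. -/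
/-!
The smooth part `Φ₂` is the mollification `x ↦ ∫ η y * Φ (x - lam • y)` of `Φ` at scale `lam`, for a
fixed smooth probability density `η` supported in the unit ball, and `Φ₁ = Φ - Φ₂`. Everything rests
on one inequality, `scaledAverage_le`: by Hölder and a change of variables, the average of a
function `F ≥ 0` at scale `s` is at most `K * s ^ (-d/p) * ‖F‖_p`, where `K` is the `L^q` norm of
`η` for the exponent `q` conjugate to `p`. Taking `s = lam` and `F = |Φ|` or `F = ‖∇Φ‖` bounds `Φ₂`
and its gradient. For `Φ₁`, write `Φ x - Φ (x - lam • y)` as an integral of `∇Φ` along the segment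
and exchange integrals (`sub_scaledAverage_le`): this bounds `|Φ₁ x|` by `lam` times the integral over
`t ∈ (0, 1]` of the averages of `‖∇Φ‖` at scales `t * lam`, hence by
`K * lam ^ (1 - d/p) * ‖∇Φ‖_p * ∫ t ^ (-d/p)`, and the last integral is finite exactly because
`d < p`.
-/

open MeasureTheory Metric

open Set
open scoped Convolution

/-- Averages at scale `s` are controlled by the `L^p` norm, at the cost of a factor `s ^ (-d/p)`. -/
lemma scaledAverage_le {d : ℕ} {p q : ℝ} (hpq : p.HolderConjugate q)
    {η F : EuclideanSpace ℝ (Fin d) → ℝ}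
    (hη : Continuous η) (hηc : HasCompactSupport η) (hη0 : ∀ y, 0 ≤ η y)
    (hF : Continuous F) (hFc : HasCompactSupport F) (hF0 : ∀ y, 0 ≤ F y)
    (x : EuclideanSpace ℝ (Fin d)) {s : ℝ} (hs : 0 < s) :
    ∫ y, η y * F (x - s • y) ≤
      (∫ y, η y ^ q) ^ (1 / q) * (s ^ (-((d : ℝ) / p)) * (∫ z, F z ^ p) ^ (1 / p)) := by
  have hp0 := hpq.pos
  have hG : Continuous fun y => F (x - s • y) := by fun_prop
  have hGc : HasCompactSupport fun y => F (x - s • y) := by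
    have h := hFc.comp_homeomorph ((Homeomorph.smulOfNeZero s hs.ne').trans (Homeomorph.subLeft x))
    exact h
  have h1 := integral_mul_le_Lp_mul_Lq_of_nonneg (μ := volume) hpq.symm
    (Filter.Eventually.of_forall hη0)
    (Filter.Eventually.of_forall fun y => hF0 (x - s • y))
    (hη.memLp_of_hasCompactSupport hηc) (hG.memLp_of_hasCompactSupport hGc)
  refine h1.trans (le_of_eq ?_)
  congr 1
  have h2 : ∫ y, F (x - s • y) ^ p = s ^ (-(d : ℝ)) * ∫ z, F z ^ p := by
    rw [Measure.integral_comp_smul volume (fun z => F (x - z) ^ p) s,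
      integral_sub_left_eq_self (fun z => F z ^ p) volume x, finrank_euclideanSpace,
      Fintype.card_fin, abs_of_pos (by positivity), smul_eq_mul, Real.rpow_neg hs.le,
      Real.rpow_natCast]
  rw [h2, Real.mul_rpow (by positivity) (integral_nonneg fun z => Real.rpow_nonneg (hF0 z) _),
    ← Real.rpow_mul hs.le]
  congr 2
  ring

/-- The difference between a function and its average at scale `lam` is controlled by the averages
of its gradient at all smaller scales. -/
lemma sub_scaledAverage_le {d : ℕ} {η Φ : EuclideanSpace ℝ (Fin d) → ℝ}
    (hη : Continuous η) (hηc : HasCompactSupport η) (hη0 : ∀ y, 0 ≤ η y) (hη1 : ∫ y, η y = 1)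
    (hηs : ∀ y, η y ≠ 0 → ‖y‖ ≤ 1)
    (hΦ : ContDiff ℝ (⊤ : ℕ∞) Φ) (hΦc : HasCompactSupport Φ)
    (x : EuclideanSpace ℝ (Fin d)) {lam : ℝ} (hlam : 0 < lam) :
    IntegrableOn (fun t : ℝ => ∫ y, η y * ‖fderiv ℝ Φ (x - (t * lam) • y)‖) (Ioc 0 1) ∧
    |Φ x - ∫ y, η y * Φ (x - lam • y)| ≤
      lam * ∫ t in Ioc (0 : ℝ) 1, ∫ y, η y * ‖fderiv ℝ Φ (x - (t * lam) • y)‖ := by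
  have hD : Continuous (fderiv ℝ Φ) := hΦ.continuous_fderiv (by simp)
  have hΦ' : Continuous Φ := hΦ.continuous
  have hηi : Integrable η := hη.integrable_of_hasCompactSupport hηc
  obtain ⟨M, hM⟩ := hD.bounded_above_of_compact_support (hΦc.fderiv ℝ)
  have hint : Integrable
      (fun z : EuclideanSpace ℝ (Fin d) × ℝ => η z.1 * ‖fderiv ℝ Φ (x - (z.2 * lam) • z.1)‖)
      (volume.prod (volume.restrict (Ioc (0 : ℝ) 1))) := by
    refine Integrable.mono' (g := fun z => η z.1 * M)
      (hηi.mul_prod (integrable_const M)) (by fun_prop) ?_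
    refine Filter.Eventually.of_forall fun z => ?_
    rw [norm_mul, norm_norm, Real.norm_of_nonneg (hη0 _)]
    exact mul_le_mul_of_nonneg_left (hM _) (hη0 _)
  refine ⟨hint.integral_prod_right, ?_⟩
  have hseg : ∀ y, |Φ x - Φ (x - lam • y)| ≤
      ‖y‖ * (lam * ∫ t in Ioc (0 : ℝ) 1, ‖fderiv ℝ Φ (x - (t * lam) • y)‖) := by
    intro y
    have hder : ∀ t : ℝ, HasDerivAt (fun t : ℝ => Φ (x - (t * lam) • y))
        (fderiv ℝ Φ (x - (t * lam) • y) (-(lam • y))) t := by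
      intro t
      have h1 : HasDerivAt (fun t : ℝ => x - (t * lam) • y) (-(lam • y)) t := by
        simpa using (((hasDerivAt_id t).mul_const lam).smul_const y).const_sub x
      exact ((hΦ.differentiable (by simp) _).hasFDerivAt).comp_hasDerivAt t h1
    have hcont : Continuous fun t : ℝ => fderiv ℝ Φ (x - (t * lam) • y) (-(lam • y)) := by
      fun_prop
    have hftc := intervalIntegral.integral_eq_sub_of_hasDerivAt (a := 0) (b := 1)
      (fun t _ => hder t) (hcont.intervalIntegrable _ _)
    simp only [one_mul, zero_mul, zero_smul, sub_zero] at hftc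
    rw [abs_sub_comm, ← hftc, ← Real.norm_eq_abs, intervalIntegral.integral_of_le zero_le_one]
    refine (norm_integral_le_integral_norm _).trans ?_
    rw [← integral_const_mul, ← integral_const_mul]
    refine integral_mono ?_ ?_ fun t => ?_
    · exact hcont.norm.integrableOn_Ioc
    · exact Continuous.integrableOn_Ioc (by fun_prop)
    · refine (ContinuousLinearMap.le_opNorm _ _).trans (le_of_eq ?_)
      rw [norm_neg, norm_smul, Real.norm_of_nonneg hlam.le]
      ring
  have hi1 : Integrable fun y => η y * Φ (x - lam • y) :=
    (show Continuous fun y => η y * Φ (x - lam • y) by fun_prop).integrable_of_hasCompactSupport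
      hηc.mul_right
  have hdiff : Φ x - ∫ y, η y * Φ (x - lam • y) = ∫ y, η y * (Φ x - Φ (x - lam • y)) := by
    simp only [mul_sub]
    rw [integral_sub (hηi.mul_const _) hi1, integral_mul_const, hη1, one_mul]
  rw [hdiff, ← integral_integral_swap hint, ← integral_const_mul, ← Real.norm_eq_abs]
  refine norm_integral_le_of_norm_le (hint.integral_prod_left.const_mul lam) ?_
  refine Filter.Eventually.of_forall fun y => ?_
  rw [integral_const_mul, norm_mul, Real.norm_of_nonneg (hη0 y), Real.norm_eq_abs, mul_left_comm]
  rcases eq_or_ne (η y) 0 with h | h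
  · simp [h]
  · refine mul_le_mul_of_nonneg_left ((hseg y).trans ?_) (hη0 y)
    exact mul_le_of_le_one_left
      (mul_nonneg hlam.le (integral_nonneg fun t => norm_nonneg _)) (hηs y h)

/-- Mollification at scale `lam`. The function `Ψ` is the convolution of `Φ` with
`z ↦ lam ^ (-d) * η (lam⁻¹ • z)`, which gives its smoothness and its derivative; the change of
variables `z = lam • y` gives the average formula. The last clause bounds the support of `Ψ`. -/
lemma exists_mollification {d : ℕ} {η Φ : EuclideanSpace ℝ (Fin d) → ℝ}
    (hη : Continuous η) (hηc : HasCompactSupport η) (hη0 : ∀ y, 0 ≤ η y)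
    (hηs : ∀ y, η y ≠ 0 → ‖y‖ ≤ 1)
    (hΦ : ContDiff ℝ (⊤ : ℕ∞) Φ) (hΦc : HasCompactSupport Φ) {lam : ℝ} (hlam : 0 < lam) :
    ∃ Ψ : EuclideanSpace ℝ (Fin d) → ℝ, ContDiff ℝ (⊤ : ℕ∞) Ψ ∧ HasCompactSupport Ψ ∧
      (∀ x, Ψ x = ∫ y, η y * Φ (x - lam • y)) ∧
      (∀ x, ‖fderiv ℝ Ψ x‖ ≤ ∫ y, η y * ‖fderiv ℝ Φ (x - lam • y)‖) ∧
      (∀ x, Ψ x ≠ 0 → ∃ z, Φ z ≠ 0 ∧ ‖x‖ ≤ ‖z‖ + lam) := by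
  set g : EuclideanSpace ℝ (Fin d) → ℝ := fun z => (lam ^ d)⁻¹ * η (lam⁻¹ • z) with hg
  have hgcont : Continuous g := by fun_prop
  have hgc : HasCompactSupport g := by
    have h := hηc.comp_homeomorph (Homeomorph.smulOfNeZero lam⁻¹ (inv_ne_zero hlam.ne'))
    exact HasCompactSupport.mul_left h
  have hg0 : ∀ z, 0 ≤ g z := fun z => mul_nonneg (by positivity) (hη0 _)
  have hgl : LocallyIntegrable g := hgcont.locallyIntegrable
  have hscale : ∀ (f : EuclideanSpace ℝ (Fin d) → ℝ) (x : EuclideanSpace ℝ (Fin d)),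
      ∫ z, g z * f (x - z) = ∫ y, η y * f (x - lam • y) := by
    intro f x
    have h := Measure.integral_comp_smul volume (fun z => η (lam⁻¹ • z) * f (x - z)) lam
    rw [finrank_euclideanSpace, Fintype.card_fin, abs_of_pos (by positivity), smul_eq_mul,
      ← integral_const_mul] at h
    simp only [smul_smul, inv_mul_cancel₀ hlam.ne', one_smul] at h
    rw [h]
    simp only [hg, mul_assoc]
  refine ⟨g ⋆[ContinuousLinearMap.lsmul ℝ ℝ] Φ, ?_, ?_, ?_, ?_, ?_⟩
  · exact hΦc.contDiff_convolution_right _ hgl hΦ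
  · exact HasCompactSupport.convolution _ hgc hΦc
  · intro x
    rw [← hscale]
    rfl
  · intro x
    rw [(hΦc.hasFDerivAt_convolution_right (ContinuousLinearMap.lsmul ℝ ℝ) hgl
      (hΦ.of_le (by simp)) x).fderiv, ← hscale (fun z => ‖fderiv ℝ Φ z‖) x]
    refine (norm_integral_le_integral_norm _).trans (le_of_eq ?_)
    congr 1
    ext z
    have : (ContinuousLinearMap.precompR (EuclideanSpace ℝ (Fin d))
        (ContinuousLinearMap.lsmul ℝ ℝ)) (g z) (fderiv ℝ Φ (x - z))
        = g z • fderiv ℝ Φ (x - z) := by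
      ext v
      simp [ContinuousLinearMap.precompR_apply]
    rw [this, norm_smul, Real.norm_of_nonneg (hg0 z)]
  · intro x hx
    obtain ⟨a, ha, b, hb, rfl⟩ :=
      Set.mem_add.1 (support_convolution_subset (ContinuousLinearMap.lsmul ℝ ℝ) hx)
    have key : ∀ a, g a ≠ 0 → ‖a‖ ≤ lam := by
      intro a ha
      have h := hηs _ (right_ne_zero_of_mul ha)
      rw [norm_smul, norm_inv, Real.norm_of_nonneg hlam.le, inv_mul_le_iff₀ hlam, mul_one] at h
      exact h
    refine ⟨b, hb, (norm_add_le a b).trans ?_⟩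
    linarith [key a ha]

/-- Decomposition lemma on ℝ^d (Lemma 3.2). -/
theorem stmt_0 (d : ℕ) (hd : 1 ≤ d) (p : ℝ) (hp : (d : ℝ) < p) :
    ∃ C > (0 : ℝ), ∀ (Φ : EuclideanSpace ℝ (Fin d) → ℝ),
      ContDiff ℝ (⊤ : ℕ∞) Φ → HasCompactSupport Φ →
      ∀ lam : ℝ, 0 < lam →
      ∃ Φ₁ Φ₂ : EuclideanSpace ℝ (Fin d) → ℝ,
        ContDiff ℝ (⊤ : ℕ∞) Φ₁ ∧ HasCompactSupport Φ₁ ∧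
        ContDiff ℝ (⊤ : ℕ∞) Φ₂ ∧ HasCompactSupport Φ₂ ∧
        Φ = Φ₁ + Φ₂ ∧
        (∀ x, |Φ₁ x| ≤
          C * lam ^ (1 - (d : ℝ) / p) * (∫ z, ‖fderiv ℝ Φ z‖ ^ p) ^ (1 / p)) ∧
        (∀ x, |Φ₂ x| ≤
          C * lam ^ (-((d : ℝ) / p)) * (∫ z, |Φ z| ^ p) ^ (1 / p)) ∧
        (∀ x, ‖fderiv ℝ Φ₂ x‖ ≤
          C * lam ^ (-((d : ℝ) / p)) * (∫ z, ‖fderiv ℝ Φ z‖ ^ p) ^ (1 / p)) ∧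
        (∀ R : ℝ, tsupport Φ ⊆ closedBall 0 R →
          tsupport Φ₁ ⊆ closedBall 0 (R + lam) ∧
          tsupport Φ₂ ⊆ closedBall 0 (R + lam)) := by
  have hd' : (1 : ℝ) ≤ d := by exact_mod_cast hd
  have hp1 : 1 < p := hd'.trans_lt hp
  have hpq : p.HolderConjugate p.conjExponent := Real.HolderConjugate.conjExponent hp1
  set q := p.conjExponent
  have hp0 := hpq.pos
  let f : ContDiffBump (0 : EuclideanSpace ℝ (Fin d)) := ⟨1 / 2, 1, by norm_num, by norm_num⟩
  set η : EuclideanSpace ℝ (Fin d) → ℝ := f.normed volume with hη_def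
  have hη : Continuous η := f.continuous_normed
  have hηc : HasCompactSupport η := f.hasCompactSupport_normed
  have hη0 : ∀ y, 0 ≤ η y := f.nonneg_normed
  have hη1 : ∫ y, η y = 1 := f.integral_normed
  have hηs : ∀ y, η y ≠ 0 → ‖y‖ ≤ 1 := by
    intro y hy
    have h : y ∈ ball (0 : EuclideanSpace ℝ (Fin d)) f.rOut := by
      rw [← f.support_normed_eq (μ := volume)]
      exact hy
    exact (mem_ball_zero_iff.1 h).le
  set K := (∫ y, η y ^ q) ^ (1 / q) with hK
  have hK0 : 0 ≤ K := Real.rpow_nonneg (integral_nonneg fun y => Real.rpow_nonneg (hη0 y) _) _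
  set α := (d : ℝ) / p with hα
  have hα1 : α < 1 := (div_lt_one hp0).2 hp
  have hα0 : 0 < α := by positivity
  have hβ : 0 < 1 - α := by linarith
  have hKC : K ≤ (K + 1) / (1 - α) := by
    rw [le_div_iff₀ hβ]
    nlinarith
  -- The factor `1 / (1 - α)` is `∫ t in (0, 1], t ^ (-α)`; `K + 1` keeps the constant positive.
  refine ⟨(K + 1) / (1 - α), by positivity, fun Φ hΦ hΦc lam hlam => ?_⟩
  obtain ⟨Ψ, hΨ, hΨc, hΨe, hΨd, hΨs⟩ := exists_mollification hη hηc hη0 hηs hΦ hΦc hlam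
  have hDc : Continuous fun z => ‖fderiv ℝ Φ z‖ := (hΦ.continuous_fderiv (by simp)).norm
  have hDs : HasCompactSupport fun z => ‖fderiv ℝ Φ z‖ := (hΦc.fderiv ℝ).norm
  have hN0 : 0 ≤ (∫ z, ‖fderiv ℝ Φ z‖ ^ p) ^ (1 / p) :=
    Real.rpow_nonneg (integral_nonneg fun z => Real.rpow_nonneg (norm_nonneg _) _) _
  have hP0 : 0 ≤ (∫ z, |Φ z| ^ p) ^ (1 / p) :=
    Real.rpow_nonneg (integral_nonneg fun z => Real.rpow_nonneg (abs_nonneg _) _) _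
  have hgrad : ∀ (x : EuclideanSpace ℝ (Fin d)) {s : ℝ}, 0 < s → _ := fun x {s} hs =>
    scaledAverage_le hpq hη hηc hη0 hDc hDs (fun z => norm_nonneg _) x hs
  refine ⟨Φ - Ψ, Ψ, hΦ.sub hΨ, hΦc.sub hΨc, hΨ, hΨc, by simp, ?_, ?_, ?_, ?_⟩
  · intro x
    obtain ⟨hi, hle⟩ := sub_scaledAverage_le hη hηc hη0 hη1 hηs hΦ hΦc x hlam
    rw [Pi.sub_apply, hΨe]
    refine hle.trans ?_
    set N := (∫ z, ‖fderiv ℝ Φ z‖ ^ p) ^ (1 / p)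
    have hri : IntegrableOn (fun t : ℝ => t ^ (-α)) (Ioc 0 1) :=
      (intervalIntegrable_iff_integrableOn_Ioc_of_le zero_le_one).1
        (intervalIntegral.intervalIntegrable_rpow' (by linarith))
    have hrv : ∫ t in Ioc (0 : ℝ) 1, t ^ (-α) = 1 / (1 - α) := by
      rw [← intervalIntegral.integral_of_le zero_le_one, integral_rpow (Or.inl (by linarith)),
        Real.one_rpow, Real.zero_rpow (by linarith)]
      congr 1 <;> ring
    have hmono : ∫ t in Ioc (0 : ℝ) 1, ∫ y, η y * ‖fderiv ℝ Φ (x - (t * lam) • y)‖ ≤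
        ∫ t in Ioc (0 : ℝ) 1, t ^ (-α) * (K * (lam ^ (-α) * N)) := by
      refine setIntegral_mono_on hi (hri.mul_const _) measurableSet_Ioc fun t ht => ?_
      refine (hgrad x (mul_pos ht.1 hlam)).trans (le_of_eq ?_)
      rw [Real.mul_rpow ht.1.le hlam.le]
      ring
    rw [integral_mul_const, hrv] at hmono
    have hl : lam ^ (1 - α) = lam * lam ^ (-α) := by
      rw [sub_eq_add_neg, Real.rpow_add hlam, Real.rpow_one]
    calc _ ≤ lam * (1 / (1 - α) * (K * (lam ^ (-α) * N))) :=
          mul_le_mul_of_nonneg_left hmono hlam.le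
      _ = K / (1 - α) * lam ^ (1 - α) * N := by rw [hl]; ring
      _ ≤ _ := by gcongr; linarith
  · intro x
    have h := scaledAverage_le hpq hη hηc hη0 hΦ.continuous.abs hΦc.norm
      (fun z => abs_nonneg _) x hlam
    rw [hΨe, ← Real.norm_eq_abs]
    refine (norm_integral_le_integral_norm _).trans ?_
    simp only [norm_mul, Real.norm_of_nonneg (hη0 _), Real.norm_eq_abs]
    refine h.trans ?_
    rw [← mul_assoc]
    gcongr
  · intro x
    refine (hΨd x).trans ((hgrad x hlam).trans ?_)
    rw [← mul_assoc]
    gcongr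
  · intro R hR
    have hΦR : ∀ z, Φ z ≠ 0 → ‖z‖ ≤ R := fun z hz =>
      mem_closedBall_zero_iff.1 (hR (subset_tsupport _ hz))
    have hΨR : ∀ z, Ψ z ≠ 0 → ‖z‖ ≤ R + lam := by
      intro z hz
      obtain ⟨w, hw, hzw⟩ := hΨs z hz
      linarith [hΦR w hw]
    refine ⟨closure_minimal ?_ isClosed_closedBall, closure_minimal ?_ isClosed_closedBall⟩
    · intro z hz
      rw [mem_closedBall_zero_iff]
      by_cases h : Φ z = 0
      · refine hΨR z fun h' => hz ?_
        simp [h, h']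
      · linarith [hΦR z h]
    · intro z hz
      exact mem_closedBall_zero_iff.2 (hΨR z hz)
end

section
/- Morrey Hölder continuity estimate: Let d ≥ 1 be an integer and let p > d be a real number. There exists a constant C > 0, depending only on d and p, such that for every smooth compactly supported function Φ : ℝ^d → ℝ and all x, y ∈ ℝ^d, |Φ(x) − Φ(y)| ≤ C |x − y|^{1 − d/p} ‖∇Φ‖_{L^p(ℝ^d)}. -/
/-!
The estimate is obtained by comparing both `Φ x` and `Φ y` with the mean of `Φ` over the closed
ball `B` of centre `x` and radius `r = ‖x - y‖`.

For a point `a` at distance at most `R` from every point of `B`, the fundamental theorem of calculus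
along segments issuing from `a` and Fubini's theorem give
`|∫_B (Φ z - Φ a) dz| ≤ R ∫₀¹ ∫_B ‖DΦ (a + t (z - a))‖ dz dt`.
By Hölder's inequality and the change of variables `w = a + t (z - a)` over the whole space, the
inner integral is at most `|B| ^ (1 - 1/p) * t ^ (-d/p) * ‖DΦ‖_p`, and `t ^ (-d/p)` is integrable on
`(0, 1)` exactly because `p > d`. This is `abs_setIntegral_sub_le`. It is applied with
`(a, R) = (x, r)` and `(a, R) = (y, 2 r)`; dividing by `|B| = r ^ d |B₁|` gives the power
`r ^ (1 - d/p)`.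
-/

open MeasureTheory

namespace Morrey

variable {d : ℕ}

lemma integrable_fderiv_rpow {Φ : EuclideanSpace ℝ (Fin d) → ℝ} (hΦ : ContDiff ℝ (⊤ : ℕ∞) Φ)
    (hc : HasCompactSupport Φ) {p : ℝ} (hp : 0 < p) :
    Integrable (fun z => ‖fderiv ℝ Φ z‖ ^ p) := by
  have hcont : Continuous (fderiv ℝ Φ) := hΦ.continuous_fderiv (by simp)
  refine Continuous.integrable_of_hasCompactSupport
    (hcont.norm.rpow_const fun _ => Or.inr hp.le) ?_
  exact (hc.fderiv (𝕜 := ℝ)).comp_left (g := fun v => ‖v‖ ^ p) (by simp [hp.ne'])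

/-- Hölder's inequality on `B`, followed by the change of variables `w = a + t (z - a)`. -/
lemma setIntegral_norm_fderiv_le {Φ : EuclideanSpace ℝ (Fin d) → ℝ} (hΦ : ContDiff ℝ (⊤ : ℕ∞) Φ)
    (hc : HasCompactSupport Φ) {p : ℝ} (hp : 1 < p) (a c : EuclideanSpace ℝ (Fin d)) (r : ℝ) {t : ℝ} (ht : 0 < t) :
    ∫ z in Metric.closedBall c r, ‖fderiv ℝ Φ (a + t • (z - a))‖ ≤
      volume.real (Metric.closedBall c r) ^ (1 - 1 / p) *
        (t ^ (-((d : ℝ) / p)) * (∫ z, ‖fderiv ℝ Φ z‖ ^ p) ^ (1 / p)) := by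
  have hp0 : 0 < p := by linarith
  have hcont : Continuous (fderiv ℝ Φ) := hΦ.continuous_fderiv (by simp)
  set B := Metric.closedBall c r
  have hBc : IsCompact B := isCompact_closedBall c r
  have hpq : p.HolderConjugate (Real.conjExponent p) := Real.HolderConjugate.conjExponent hp
  set q := Real.conjExponent p
  have hf : Continuous fun z : EuclideanSpace ℝ (Fin d) => ‖fderiv ℝ Φ (a + t • (z - a))‖ := by fun_prop
  have : IsFiniteMeasure (volume.restrict B) := ⟨by simpa using hBc.measure_lt_top⟩
  have hmem : MemLp (fun z : EuclideanSpace ℝ (Fin d) => ‖fderiv ℝ Φ (a + t • (z - a))‖) (ENNReal.ofReal p)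
      (volume.restrict B) := by
    obtain ⟨M, hM⟩ := hBc.exists_bound_of_continuousOn hf.continuousOn
    refine MemLp.of_bound hf.aestronglyMeasurable M ?_
    exact (ae_restrict_iff' hBc.measurableSet).2 (Filter.Eventually.of_forall hM)
  have hH := integral_mul_le_Lp_mul_Lq_of_nonneg (μ := volume.restrict B) hpq
    (f := fun z : EuclideanSpace ℝ (Fin d) => ‖fderiv ℝ Φ (a + t • (z - a))‖) (g := fun _ => (1 : ℝ))
    (Filter.Eventually.of_forall fun _ => norm_nonneg _)
    (Filter.Eventually.of_forall fun _ => zero_le_one) hmem (memLp_const 1)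
  have hq : 1 / q = 1 - 1 / p := by
    have := hpq.inv_add_inv_eq_one
    simp only [one_div]; linarith
  simp only [mul_one, Real.one_rpow, integral_const, smul_eq_mul, measureReal_restrict_apply_univ,
    hq] at hH
  refine hH.trans ?_
  rw [mul_comm]
  gcongr
  have hint := integrable_fderiv_rpow hΦ hc hp0
  have hint' : Integrable fun z : EuclideanSpace ℝ (Fin d) => ‖fderiv ℝ Φ (a + t • (z - a))‖ ^ p :=
    ((hint.comp_add_left a).comp_smul ht.ne').comp_sub_right a
  have hcv : ∫ z : EuclideanSpace ℝ (Fin d), ‖fderiv ℝ Φ (a + t • (z - a))‖ ^ p =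
      t ^ (-(d : ℝ)) * ∫ z, ‖fderiv ℝ Φ z‖ ^ p := by
    rw [integral_sub_right_eq_self (fun z : EuclideanSpace ℝ (Fin d) => ‖fderiv ℝ Φ (a + t • z)‖ ^ p) a,
      Measure.integral_comp_smul volume (fun z : EuclideanSpace ℝ (Fin d) => ‖fderiv ℝ Φ (a + z)‖ ^ p) t,
      integral_add_left_eq_self (fun z : EuclideanSpace ℝ (Fin d) => ‖fderiv ℝ Φ z‖ ^ p) a]
    simp [abs_of_pos ht, Real.rpow_neg ht.le]
  calc (∫ z in B, ‖fderiv ℝ Φ (a + t • (z - a))‖ ^ p) ^ (1 / p)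
      ≤ (∫ z, ‖fderiv ℝ Φ (a + t • (z - a))‖ ^ p) ^ (1 / p) := by
        have h0 : ∀ z : EuclideanSpace ℝ (Fin d), 0 ≤ ‖fderiv ℝ Φ (a + t • (z - a))‖ ^ p := fun z => by positivity
        refine Real.rpow_le_rpow (integral_nonneg h0) ?_ (by positivity)
        exact setIntegral_le_integral hint' (Filter.Eventually.of_forall h0)
    _ = t ^ (-((d : ℝ) / p)) * (∫ z, ‖fderiv ℝ Φ z‖ ^ p) ^ (1 / p) := by
        rw [hcv, Real.mul_rpow (by positivity) (integral_nonneg fun z => by positivity),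
          ← Real.rpow_mul ht.le]
        congr 2
        ring

lemma abs_sub_le_integral {Φ : EuclideanSpace ℝ (Fin d) → ℝ} (hΦ : ContDiff ℝ (⊤ : ℕ∞) Φ) (a z : EuclideanSpace ℝ (Fin d)) :
    |Φ z - Φ a| ≤ ‖z - a‖ * ∫ t in (0 : ℝ)..1, ‖fderiv ℝ Φ (a + t • (z - a))‖ := by
  have hcont : Continuous (fderiv ℝ Φ) := hΦ.continuous_fderiv (by simp)
  have hd : ∀ t : ℝ, HasDerivAt (fun t : ℝ => Φ (a + t • (z - a)))
      (fderiv ℝ Φ (a + t • (z - a)) (z - a)) t := by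
    intro t
    have h1 : HasDerivAt (fun t : ℝ => a + t • (z - a)) (z - a) t := by
      simpa using ((hasDerivAt_id t).smul_const (z - a)).const_add a
    exact ((hΦ.differentiable (by simp) _).hasFDerivAt).comp_hasDerivAt t h1
  have hFTC := intervalIntegral.integral_eq_sub_of_hasDerivAt (a := 0) (b := 1)
    (fun t _ => hd t) (Continuous.intervalIntegrable (by fun_prop) _ _)
  simp only [one_smul, zero_smul, add_zero, add_sub_cancel] at hFTC
  rw [← hFTC, ← intervalIntegral.integral_const_mul]
  refine (intervalIntegral.abs_integral_le_integral_abs zero_le_one).trans ?_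
  refine intervalIntegral.integral_mono_on zero_le_one
    (Continuous.intervalIntegrable (by fun_prop) _ _)
    (Continuous.intervalIntegrable (by fun_prop) _ _) fun t _ => ?_
  rw [mul_comm]
  exact (fderiv ℝ Φ (a + t • (z - a))).le_opNorm (z - a)

/-- The oscillation of `Φ` around its value at `a`, integrated over a ball all of whose points lie
within distance `R` of `a`. -/
lemma abs_setIntegral_sub_le {Φ : EuclideanSpace ℝ (Fin d) → ℝ} (hΦ : ContDiff ℝ (⊤ : ℕ∞) Φ)
    (hc : HasCompactSupport Φ) {p : ℝ} (hp : 1 < p) (hdp : (d : ℝ) < p) (a c : EuclideanSpace ℝ (Fin d)) (r R : ℝ)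
    (hR : 0 ≤ R) (hB : ∀ z ∈ Metric.closedBall c r, ‖z - a‖ ≤ R) :
    |∫ z in Metric.closedBall c r, (Φ z - Φ a)| ≤
      R * (volume.real (Metric.closedBall c r) ^ (1 - 1 / p) *
        ((1 - (d : ℝ) / p)⁻¹ * (∫ z, ‖fderiv ℝ Φ z‖ ^ p) ^ (1 / p))) := by
  have hp0 : 0 < p := by linarith
  have hcont : Continuous (fderiv ℝ Φ) := hΦ.continuous_fderiv (by simp)
  have hΦc : Continuous Φ := hΦ.continuous
  have hlt : (d : ℝ) / p < 1 := (div_lt_one hp0).2 hdp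
  set B := Metric.closedBall c r
  have hBc : IsCompact B := isCompact_closedBall c r
  set N := (∫ z, ‖fderiv ℝ Φ z‖ ^ p) ^ (1 / p)
  have hprod : Integrable (fun w : EuclideanSpace ℝ (Fin d) × ℝ => ‖fderiv ℝ Φ (a + w.2 • (w.1 - a))‖)
      ((volume.restrict B).prod (volume.restrict (Set.Ioc (0 : ℝ) 1))) := by
    rw [Measure.prod_restrict]
    have : Continuous (fun w : EuclideanSpace ℝ (Fin d) × ℝ => ‖fderiv ℝ Φ (a + w.2 • (w.1 - a))‖) := by fun_prop
    exact (this.continuousOn.integrableOn_compact (hBc.prod isCompact_Icc)).mono_set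
      (Set.prod_mono subset_rfl Set.Ioc_subset_Icc_self)
  calc |∫ z in B, (Φ z - Φ a)| ≤ ∫ z in B, |Φ z - Φ a| := abs_integral_le_integral_abs
    _ ≤ ∫ z in B, R * ∫ t in Set.Ioc (0 : ℝ) 1, ‖fderiv ℝ Φ (a + t • (z - a))‖ := by
        refine setIntegral_mono_on ?_ (hprod.integral_prod_left.const_mul R) hBc.measurableSet ?_
        · exact (by fun_prop : Continuous fun z => |Φ z - Φ a|).continuousOn.integrableOn_compact hBc
        · intro z hz
          refine (abs_sub_le_integral hΦ a z).trans ?_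
          rw [intervalIntegral.integral_of_le zero_le_one]
          exact mul_le_mul_of_nonneg_right (hB z hz) (integral_nonneg fun t => norm_nonneg _)
    _ = R * ∫ t in Set.Ioc (0 : ℝ) 1, ∫ z in B, ‖fderiv ℝ Φ (a + t • (z - a))‖ := by
        rw [integral_const_mul, integral_integral_swap hprod]
    _ ≤ R * ∫ t in Set.Ioc (0 : ℝ) 1,
          volume.real B ^ (1 - 1 / p) * (t ^ (-((d : ℝ) / p)) * N) := by
        refine mul_le_mul_of_nonneg_left ?_ hR
        refine setIntegral_mono_on hprod.integral_prod_right ?_ measurableSet_Ioc ?_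
        · have := (intervalIntegral.intervalIntegrable_rpow' (a := 0) (b := 1)
            (r := -((d : ℝ) / p)) (by linarith)).1
          exact (this.mul_const N).const_mul _
        · intro t ht
          exact setIntegral_norm_fderiv_le hΦ hc hp a c r ht.1
    _ = _ := by
        rw [integral_const_mul, integral_mul_const, ← intervalIntegral.integral_of_le zero_le_one,
          integral_rpow (Or.inl (by linarith)), Real.one_rpow, Real.zero_rpow (by linarith)]
        congr 3
        rw [sub_zero, one_div]
        congr 1
        ring

end Morrey

/-- Morrey Hölder continuity estimate. -/
theorem stmt_1 (d : ℕ) (hd : 1 ≤ d) (p : ℝ) (hp : (d : ℝ) < p) :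
    ∃ C > (0 : ℝ), ∀ (Φ : EuclideanSpace ℝ (Fin d) → ℝ),
      ContDiff ℝ (⊤ : ℕ∞) Φ → HasCompactSupport Φ →
      ∀ x y : EuclideanSpace ℝ (Fin d),
        |Φ x - Φ y| ≤
          C * ‖x - y‖ ^ (1 - (d : ℝ) / p) * (∫ z, ‖fderiv ℝ Φ z‖ ^ p) ^ (1 / p) := by
  have hp1 : 1 < p := lt_of_le_of_lt (by exact_mod_cast hd) hp
  have hp0 : 0 < p := by linarith
  have hlt : (d : ℝ) / p < 1 := (div_lt_one hp0).2 hp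
  have hpos : 0 < 1 - (d : ℝ) / p := by linarith
  set ω := volume.real (Metric.closedBall (0 : EuclideanSpace ℝ (Fin d)) 1) with hω
  have hω0 : 0 < ω := ENNReal.toReal_pos
    (Metric.measure_closedBall_pos volume _ one_pos).ne' measure_closedBall_lt_top.ne
  refine ⟨3 * ω ^ (-(1 / p)) * (1 - (d : ℝ) / p)⁻¹, by positivity, ?_⟩
  intro Φ hΦ hc x y
  rcases eq_or_ne x y with rfl | hxy
  · simp [Real.zero_rpow hpos.ne']
  set r := ‖x - y‖ with hr
  have hr0 : 0 < r := norm_pos_iff.2 (sub_ne_zero.2 hxy)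
  set N := (∫ z, ‖fderiv ℝ Φ z‖ ^ p) ^ (1 / p)
  set B := Metric.closedBall x r
  have hBc : IsCompact B := isCompact_closedBall x r
  have hV : volume.real B = r ^ (d : ℝ) * ω := by
    rw [measureReal_def, Measure.addHaar_closedBall' volume x hr0.le, ENNReal.toReal_mul,
      ENNReal.toReal_ofReal (by positivity), hω, measureReal_def]
    simp
  have hV0 : 0 < volume.real B := by rw [hV]; positivity
  have h1 := Morrey.abs_setIntegral_sub_le hΦ hc hp1 hp x x r r hr0.le fun z hz => by
    simpa [dist_eq_norm] using hz
  have h2 := Morrey.abs_setIntegral_sub_le hΦ hc hp1 hp y x r (2 * r) (by positivity)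
    fun z hz => by
      have hz' : ‖z - x‖ ≤ r := by simpa [dist_eq_norm] using hz
      have := norm_sub_le_norm_sub_add_norm_sub z x y
      linarith
  have hint : ∀ a, IntegrableOn (fun z => Φ z - Φ a) B := fun a =>
    (hΦ.continuous.sub continuous_const).continuousOn.integrableOn_compact hBc
  have hdiff : volume.real B * (Φ x - Φ y) =
      (∫ z in B, (Φ z - Φ y)) - ∫ z in B, (Φ z - Φ x) := by
    rw [← integral_sub (hint y) (hint x)]
    simp
  have hmain : volume.real B * |Φ x - Φ y| ≤
      3 * r * (volume.real B ^ (1 - 1 / p) * ((1 - (d : ℝ) / p)⁻¹ * N)) := by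
    rw [← abs_of_pos hV0, ← abs_mul, hdiff, abs_of_pos hV0]
    refine (abs_sub _ _).trans ?_
    linarith
  have hpow : volume.real B ^ (1 - 1 / p) =
      volume.real B * (r ^ (-((d : ℝ) / p)) * ω ^ (-(1 / p))) := by
    rw [sub_eq_add_neg, Real.rpow_add hV0, Real.rpow_one]
    congr 1
    rw [hV, Real.mul_rpow (by positivity) hω0.le, ← Real.rpow_mul hr0.le]
    congr 2
    ring
  have hrp : r ^ (1 - (d : ℝ) / p) = r * r ^ (-((d : ℝ) / p)) := by
    rw [sub_eq_add_neg, Real.rpow_add hr0, Real.rpow_one]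
  refine le_of_mul_le_mul_left (hmain.trans_eq ?_) hV0
  rw [hpow, hrp]
  ring
end

section
/- Supercritical Sobolev sup-norm bound: Let d ≥ 1 be an integer and let p > d be a real number. There exists a constant C > 0, depending only on d and p, such that for every smooth compactly supported function Φ : ℝ^d → ℝ, ‖Φ‖_{L^∞(ℝ^d)} ≤ C ( ‖Φ‖_{L^p(ℝ^d)} + ‖∇Φ‖_{L^p(ℝ^d)} ). -/
open MeasureTheory

/-!
The proof compares `Φ x` with its mean over the unit ball around `x` by moving the radius. Write
`B` for the closed unit ball and `m t = ∫ y in B, Φ (x + t • y)`. Then `m 0 = vol B * Φ x`, while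
`m 1` is controlled by `‖Φ‖_p` through Hölder. Differentiating under the integral sign gives
`|m' t| ≤ ∫ y in B, ‖∇Φ (x + t • y)‖`, and Hölder together with the scaling `z = x + t • y` bounds
this by a constant times `t ^ (-d / p) * ‖∇Φ‖_p` (`setIntegral_comp_smul_le`). The exponent `-d / p`
exceeds `-1` exactly because `p > d`, so this bound has the continuous primitive
`t ^ (1 - d / p) / (1 - d / p)`, and monotonicity of `m` plus that primitive on `[0, 1]` yields the
estimate (`mean_bound`).
-/

/-- Hölder's inequality on the unit ball, followed by the change of variables `z = x + t • y`, which
produces the factor `t ^ (-d / p)`. -/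
lemma setIntegral_comp_smul_le {d : ℕ} {p : ℝ} (hp1 : 1 < p)
    (f : EuclideanSpace ℝ (Fin d) → ℝ) (hf : Continuous f) (hfc : HasCompactSupport f)
    (hf0 : ∀ z, 0 ≤ f z) (x : EuclideanSpace ℝ (Fin d)) {t : ℝ} (ht : 0 < t) :
    ∫ y in Metric.closedBall (0 : EuclideanSpace ℝ (Fin d)) 1, f (x + t • y) ≤
      (volume.real (Metric.closedBall (0 : EuclideanSpace ℝ (Fin d)) 1)) ^ (1 - 1 / p) *
        (t ^ (-(d / p)) * (∫ z, f z ^ p) ^ (1 / p)) := by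
  have hp0 : 0 < p := by linarith
  set B := Metric.closedBall (0 : EuclideanSpace ℝ (Fin d)) 1 with hB
  have hBc : IsCompact B := isCompact_closedBall _ _
  have : IsFiniteMeasure (volume.restrict B) := ⟨by simpa using hBc.measure_lt_top⟩
  have hg : Continuous fun y => f (x + t • y) := by fun_prop
  have hpq : p.HolderConjugate (p / (p - 1)) := Real.HolderConjugate.conjExponent hp1
  have hmem : MemLp (fun y => f (x + t • y)) (ENNReal.ofReal p) (volume.restrict B) := by
    obtain ⟨K, hK⟩ := hf.bounded_above_of_compact_support hfc
    exact MemLp.of_bound hg.aestronglyMeasurable K (Filter.Eventually.of_forall fun y => hK _)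
  have h1 := integral_mul_le_Lp_mul_Lq_of_nonneg (μ := volume.restrict B) hpq
    (f := fun y => f (x + t • y)) (g := fun _ => (1 : ℝ))
    (Filter.Eventually.of_forall fun y => hf0 _) (Filter.Eventually.of_forall fun y => zero_le_one)
    hmem (memLp_const _)
  have hint : Integrable fun z => f z ^ p :=
    (hf.rpow_const fun _ => Or.inr hp0.le).integrable_of_hasCompactSupport
      (hfc.comp_left (g := fun s : ℝ => s ^ p) (Real.zero_rpow hp0.ne'))
  have hint2 : Integrable fun y => f (x + t • y) ^ p :=
    (hint.comp_add_left x).comp_smul ht.ne'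
  have h2 : ∫ y in B, f (x + t • y) ^ p ≤ t ^ (-(d : ℝ)) * ∫ z, f z ^ p := by
    calc ∫ y in B, f (x + t • y) ^ p ≤ ∫ y, f (x + t • y) ^ p :=
          setIntegral_le_integral hint2
            (Filter.Eventually.of_forall fun y => Real.rpow_nonneg (hf0 _) _)
      _ = t ^ (-(d : ℝ)) * ∫ z, f z ^ p := by
          have := Measure.integral_comp_smul (volume : Measure (EuclideanSpace ℝ (Fin d)))
            (fun z => f (x + z) ^ p) t
          rw [this, integral_add_left_eq_self (fun z => f z ^ p) x, Real.rpow_neg ht.le,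
            Real.rpow_natCast, finrank_euclideanSpace_fin, smul_eq_mul, abs_of_pos (by positivity)]
  have hI0 : 0 ≤ ∫ y in B, f (x + t • y) ^ p :=
    integral_nonneg fun y => Real.rpow_nonneg (hf0 _) _
  have hN0 : 0 ≤ ∫ z, f z ^ p := integral_nonneg fun y => Real.rpow_nonneg (hf0 _) _
  have h3 := Real.rpow_le_rpow hI0 h2 (one_div_pos.2 hp0).le
  rw [Real.mul_rpow (by positivity) hN0, ← Real.rpow_mul ht.le,
    show -(d : ℝ) * (1 / p) = -(d / p) by ring] at h3
  have he : 1 / (p / (p - 1)) = 1 - 1 / p := by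
    have : p - 1 ≠ 0 := by linarith
    field_simp
  simp only [mul_one, Real.one_rpow, integral_const, smul_eq_mul, he,
    measureReal_restrict_apply_univ] at h1
  calc _ ≤ _ := h1
    _ ≤ _ := by rw [mul_comm]; gcongr

/-- The one-sided form of the estimate, multiplied by the volume of the unit ball. -/
lemma mean_bound {d : ℕ} {p : ℝ} (hp1 : 1 < p) (hp : (d : ℝ) < p)
    (Φ : EuclideanSpace ℝ (Fin d) → ℝ) (hΦ : ContDiff ℝ (⊤ : ℕ∞) Φ) (hc : HasCompactSupport Φ)
    (x : EuclideanSpace ℝ (Fin d)) :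
    volume.real (Metric.closedBall (0 : EuclideanSpace ℝ (Fin d)) 1) * Φ x ≤
      (volume.real (Metric.closedBall (0 : EuclideanSpace ℝ (Fin d)) 1)) ^ (1 - 1 / p) *
        ((∫ z, |Φ z| ^ p) ^ (1 / p)
          + (∫ z, ‖fderiv ℝ Φ z‖ ^ p) ^ (1 / p) / (1 - d / p)) := by
  have hp0 : 0 < p := by linarith
  set B := Metric.closedBall (0 : EuclideanSpace ℝ (Fin d)) 1 with hB
  have hBc : IsCompact B := isCompact_closedBall _ _
  have : IsFiniteMeasure (volume.restrict B) := ⟨by simpa using hBc.measure_lt_top⟩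
  set V := volume.real B
  set N0 := (∫ z, |Φ z| ^ p) ^ (1 / p)
  set N1 := (∫ z, ‖fderiv ℝ Φ z‖ ^ p) ^ (1 / p)
  have hγ : 0 < 1 - d / p := by rw [sub_pos, div_lt_one hp0]; exact hp
  have hdc : Continuous (fderiv ℝ Φ) := hΦ.continuous_fderiv (by simp)
  have hdcs : HasCompactSupport (fderiv ℝ Φ) := hc.fderiv ℝ
  have hdiff : Differentiable ℝ Φ := hΦ.differentiable (by simp)
  have hΦc := hΦ.continuous
  obtain ⟨K, hK⟩ := hdc.bounded_above_of_compact_support hdcs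
  let m : ℝ → ℝ := fun t => ∫ y in B, Φ (x + t • y)
  let m' : ℝ → ℝ := fun t => ∫ y in B, fderiv ℝ Φ (x + t • y) y
  have hm : ∀ t, HasDerivAt m (m' t) t := by
    intro t
    refine (hasDerivAt_integral_of_dominated_loc_of_deriv_le (bound := fun _ => K)
      (s := Set.univ) (F' := fun t y => fderiv ℝ Φ (x + t • y) y)
      Filter.univ_mem ?_ ?_ ?_ ?_ (integrable_const _) ?_).2
    · exact Filter.Eventually.of_forall fun s =>
        (by fun_prop : Continuous fun y => Φ (x + s • y)).aestronglyMeasurable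
    · exact (by fun_prop : Continuous fun y => Φ (x + t • y)).continuousOn.integrableOn_compact hBc
    · exact (by fun_prop : Continuous fun y => fderiv ℝ Φ (x + t • y) y).aestronglyMeasurable
    · refine (ae_restrict_iff' hBc.measurableSet).2 (Filter.Eventually.of_forall fun y hy s _ => ?_)
      have hy1 : ‖y‖ ≤ 1 := by simpa [hB] using hy
      exact ((fderiv ℝ Φ (x + s • y)).le_of_opNorm_le (hK _) y).trans
        (mul_le_of_le_one_right ((norm_nonneg _).trans (hK 0)) hy1)
    · refine Filter.Eventually.of_forall fun y s _ => ?_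
      have h1 : HasDerivAt (fun s : ℝ => x + s • y) y s := by
        simpa using ((hasDerivAt_id s).smul_const y).const_add x
      exact (hdiff (x + s • y)).hasFDerivAt.comp_hasDerivAt s h1
  have hm' : ∀ t, 0 < t → -(V ^ (1 - 1 / p) * (t ^ (-(d / p)) * N1)) ≤ m' t := by
    intro t ht
    have h1 := setIntegral_comp_smul_le hp1 (fun z => ‖fderiv ℝ Φ z‖) hdc.norm hdcs.norm
      (fun z => norm_nonneg _) x ht
    have hi : IntegrableOn (fun y => ‖fderiv ℝ Φ (x + t • y)‖) B volume :=
      (by fun_prop : Continuous fun y => ‖fderiv ℝ Φ (x + t • y)‖).continuousOn.integrableOn_compact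
        hBc
    have h2 : ‖m' t‖ ≤ ∫ y in B, ‖fderiv ℝ Φ (x + t • y)‖ := by
      refine norm_integral_le_of_norm_le hi
        ((ae_restrict_iff' hBc.measurableSet).2 (Filter.Eventually.of_forall fun y hy => ?_))
      have hy1 : ‖y‖ ≤ 1 := by simpa [hB] using hy
      exact ((fderiv ℝ Φ (x + t • y)).le_opNorm y).trans
        (mul_le_of_le_one_right (norm_nonneg _) hy1)
    exact (abs_le.1 (h2.trans h1)).1
  -- Adding a primitive of the bound on `|m'|` makes `m` nondecreasing. The primitive is continuous
  -- at `0`, though not differentiable there, so only interior derivatives are used.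
  have hder : ∀ t : ℝ, 0 < t →
      HasDerivAt (fun t => V ^ (1 - 1 / p) * (t ^ (1 - d / p) * (N1 / (1 - d / p))) + m t)
        (V ^ (1 - 1 / p) * (t ^ (-(d / p)) * N1) + m' t) t := by
    intro t ht
    have h := (((Real.hasDerivAt_rpow_const (p := 1 - d / p) (Or.inl ht.ne')).mul_const
      (N1 / (1 - d / p))).const_mul (V ^ (1 - 1 / p))).add (hm t)
    refine h.congr_deriv ?_
    rw [show (1 - d / p - 1 : ℝ) = -(d / p) by ring]
    have hc1 : (1 - d / p) * (N1 / (1 - d / p)) = N1 := mul_div_cancel₀ N1 hγ.ne'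
    linear_combination V ^ (1 - 1 / p) * t ^ (-(d / p)) * hc1
  have hmono : MonotoneOn
      (fun t : ℝ => V ^ (1 - 1 / p) * (t ^ (1 - d / p) * (N1 / (1 - d / p))) + m t)
      (Set.Icc 0 1) := by
    refine monotoneOn_of_deriv_nonneg (convex_Icc 0 1) ?_ ?_ ?_
    · have hmc : Continuous m := continuous_iff_continuousAt.2 fun t => (hm t).continuousAt
      have : Continuous fun t : ℝ => t ^ (1 - d / p) := Real.continuous_rpow_const hγ.le
      exact Continuous.continuousOn (by fun_prop)
    · intro t ht
      rw [interior_Icc] at ht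
      exact (hder t ht.1).differentiableAt.differentiableWithinAt
    · intro t ht
      rw [interior_Icc] at ht
      rw [(hder t ht.1).deriv]
      linarith [hm' t ht.1]
  have h01 := hmono (by simp) (by simp) (zero_le_one' ℝ)
  have hm0 : m 0 = V * Φ x := by simp [m, V]
  have hm1 : m 1 ≤ V ^ (1 - 1 / p) * N0 := by
    have h1 := setIntegral_comp_smul_le hp1 (fun z => |Φ z|) hΦc.abs hc.abs
      (fun z => abs_nonneg _) x one_pos
    rw [Real.one_rpow, one_mul] at h1
    have hi : IntegrableOn (fun y => Φ (x + (1 : ℝ) • y)) B volume :=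
      (by fun_prop : Continuous fun y => Φ (x + (1 : ℝ) • y)).continuousOn.integrableOn_compact hBc
    exact (integral_mono hi hi.abs fun y => le_abs_self _).trans h1
  simp only [Real.zero_rpow hγ.ne', Real.one_rpow, zero_mul, mul_zero, zero_add, one_mul,
    hm0] at h01
  linarith

/-- Supercritical Sobolev sup-norm bound. -/
theorem stmt_2 (d : ℕ) (hd : 1 ≤ d) (p : ℝ) (hp : (d : ℝ) < p) :
    ∃ C > (0 : ℝ), ∀ (Φ : EuclideanSpace ℝ (Fin d) → ℝ),
      ContDiff ℝ (⊤ : ℕ∞) Φ → HasCompactSupport Φ →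
      ∀ x : EuclideanSpace ℝ (Fin d),
        |Φ x| ≤
          C * ((∫ z, |Φ z| ^ p) ^ (1 / p) + (∫ z, ‖fderiv ℝ Φ z‖ ^ p) ^ (1 / p)) := by
  have hp1 : 1 < p := lt_of_le_of_lt (by exact_mod_cast hd) hp
  have hp0 : 0 < p := by linarith
  have hγ : 0 < 1 - d / p := by rw [sub_pos, div_lt_one hp0]; exact hp
  have hγ1 : 1 - d / p ≤ 1 := by
    have : 0 ≤ d / p := by positivity
    linarith
  have hV : 0 < volume.real (Metric.closedBall (0 : EuclideanSpace ℝ (Fin d)) 1) :=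
    ENNReal.toReal_pos (Metric.measure_closedBall_pos _ _ one_pos).ne'
      (isCompact_closedBall _ _).measure_lt_top.ne
  set V := volume.real (Metric.closedBall (0 : EuclideanSpace ℝ (Fin d)) 1) with hVdef
  refine ⟨V ^ (1 - 1 / p) / (V * (1 - d / p)), by positivity, fun Φ hΦ hc x => ?_⟩
  have h1 := mean_bound hp1 hp Φ hΦ hc x
  have h2 := mean_bound hp1 hp (fun z => -Φ z) hΦ.neg hc.neg x
  simp only [abs_neg, fderiv_fun_neg, norm_neg] at h2
  rw [← hVdef] at h1 h2
  have hN0 : 0 ≤ (∫ z, |Φ z| ^ p) ^ (1 / p) :=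
    Real.rpow_nonneg (integral_nonneg fun z => Real.rpow_nonneg (abs_nonneg _) _) _
  set N0 := (∫ z, |Φ z| ^ p) ^ (1 / p)
  set N1 := (∫ z, ‖fderiv ℝ Φ z‖ ^ p) ^ (1 / p)
  have h3 : V * |Φ x| ≤ V ^ (1 - 1 / p) * (N0 + N1 / (1 - d / p)) := by
    rcases abs_cases (Φ x) with h | h <;> rw [h.1] <;> assumption
  -- The factor `1 / (1 - d / p)` is at least `1`, so it may be put on both norms.
  have h4 : N0 ≤ N0 / (1 - d / p) := le_div_self hN0 hγ hγ1
  have h5 : V * |Φ x| ≤ V ^ (1 - 1 / p) * ((N0 + N1) / (1 - d / p)) := by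
    rw [add_div]
    exact h3.trans (by gcongr)
  calc |Φ x| = V * |Φ x| / V := by field_simp
    _ ≤ V ^ (1 - 1 / p) * ((N0 + N1) / (1 - d / p)) / V := by gcongr
    _ = _ := by field_simp
end

section
/- Hardy-type inequality with exponential weight on ℝ (inequality (4.11) of the paper): Let h : ℝ → ℝ be a smooth function with compact support, let λ > 0, and let 1 ≤ p < ∞. Then ∫_ℝ |h(τ)|^p e^{−λτ} dτ ≤ (p/λ)^p ∫_ℝ |h′(τ)|^p e^{−λτ} dτ. -/
open MeasureTheory

/-!
For `1 < p` the function `|h| ^ p` is `C¹` with compact support, so integrating the derivative of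
`|h| ^ p * exp (-λ τ)` over `ℝ` gives
`∫ |h| ^ p exp (-λ τ) = λ⁻¹ ∫ (|h| ^ p)' exp (-λ τ) ≤ ∫ |h| ^ (p - 1) (p / λ * |h'|) exp (-λ τ)`.
Young's inequality with exponents `p / (p - 1)` and `p` bounds the right-hand integrand pointwise by
`((1 - 1 / p) |h| ^ p + (1 / p) (p / λ) ^ p |h'| ^ p) exp (-λ τ)`; absorbing the first term into the
left-hand side gives exactly the constant `(p / λ) ^ p`.

For `p = 1` the function `|h|` need not be differentiable. Instead, the inequality at the exponents
`1 + s ^ 2` with `s ≠ 0` passes to the limit `s → 0`, both sides being continuous in `s`.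
-/

lemma hasCompactSupport_abs_rpow_mul {f : ℝ → ℝ} (hf : HasCompactSupport f) (w : ℝ → ℝ) {p : ℝ}
    (hp : p ≠ 0) : HasCompactSupport (fun τ => |f τ| ^ p * w τ) := by
  refine hf.mono fun τ hτ hf0 => hτ ?_
  simp [hf0, Real.zero_rpow hp]

lemma integrable_abs_rpow_mul_exp {f : ℝ → ℝ} (hc : Continuous f) (hf : HasCompactSupport f)
    (lam : ℝ) {p : ℝ} (hp : 0 < p) :
    Integrable (fun τ => |f τ| ^ p * Real.exp (-lam * τ)) := by
  refine Continuous.integrable_of_hasCompactSupport ?_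
    (hasCompactSupport_abs_rpow_mul hf _ hp.ne')
  exact (hc.abs.rpow_const fun _ => Or.inr hp.le).mul (by fun_prop)

/-- Young's inequality, weighted so that the constant `c` multiplies `b`. -/
lemma rpow_sub_one_mul_le {a b c p : ℝ} (ha : 0 ≤ a) (hb : 0 ≤ b) (hc : 0 ≤ c) (hp : 1 < p) :
    a ^ (p - 1) * (c * b) ≤ (1 - 1 / p) * a ^ p + 1 / p * (c ^ p * b ^ p) := by
  have hp0 : 0 < p := by linarith
  have h1p : 1 / p ≤ 1 := by rw [div_le_one hp0]; exact hp.le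
  have key := Real.geom_mean_le_arith_mean2_weighted (w₁ := 1 - 1 / p) (w₂ := 1 / p)
    (sub_nonneg.2 h1p) (by positivity) (Real.rpow_nonneg ha p)
    (Real.rpow_nonneg (mul_nonneg hc hb) p) (by ring)
  rw [← Real.rpow_mul ha, ← Real.rpow_mul (mul_nonneg hc hb),
    mul_one_div_cancel hp0.ne', Real.rpow_one, Real.mul_rpow hc hb] at key
  have e : p * (1 - 1 / p) = p - 1 := by field_simp
  rwa [e] at key

/-- The inequality for `1 < p`, where `|h| ^ p` is continuously differentiable. -/
lemma hardy_exp_of_one_lt (h : ℝ → ℝ) (hsmooth : ContDiff ℝ 1 h) (hsupp : HasCompactSupport h)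
    (lam : ℝ) (hlam : 0 < lam) (p : ℝ) (hp : 1 < p) :
    ∫ τ, |h τ| ^ p * Real.exp (-lam * τ) ≤
      (p / lam) ^ p * ∫ τ, |deriv h τ| ^ p * Real.exp (-lam * τ) := by
  have hp0 : 0 < p := by linarith
  have hdc : Continuous (deriv h) := hsmooth.continuous_deriv le_rfl
  have iA := integrable_abs_rpow_mul_exp hsmooth.continuous hsupp lam hp0
  have iB := integrable_abs_rpow_mul_exp hdc hsupp.deriv lam hp0
  set f : ℝ → ℝ := fun τ => |h τ| ^ p with hf
  have fC : ContDiff ℝ 1 f := hsmooth.norm_rpow hp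
  have fS : HasCompactSupport f := by
    simpa using hasCompactSupport_abs_rpow_mul hsupp (fun _ => 1) hp0.ne'
  have iD : Integrable (fun τ => deriv f τ * Real.exp (-lam * τ)) :=
    Continuous.integrable_of_hasCompactSupport
      ((fC.continuous_deriv le_rfl).mul (by fun_prop)) fS.deriv.mul_right
  have hder : ∀ τ, deriv f τ = p * |h τ| ^ (p - 2) * h τ * deriv h τ := fun τ =>
    ((hasDerivAt_abs_rpow (h τ) hp).comp τ
      (hsmooth.differentiable one_ne_zero τ).hasDerivAt).deriv
  have hle : ∀ τ, deriv f τ ≤ p * |h τ| ^ (p - 1) * |deriv h τ| := by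
    intro τ
    rw [hder]
    refine (le_abs_self _).trans ?_
    rw [abs_mul, abs_mul, abs_mul, abs_of_pos hp0, abs_of_nonneg (by positivity : 0 ≤ |h τ| ^ (p-2))]
    rcases eq_or_ne (h τ) 0 with h0 | h0
    · simp only [h0, abs_zero, mul_zero, zero_mul]
      positivity
    · have : |h τ| ^ (p - 1) = |h τ| ^ (p - 2) * |h τ| := by
        rw [← Real.rpow_add_one (abs_pos.2 h0).ne']
        ring_nf
      rw [this, mul_assoc p]
  have parts : ∫ τ, (deriv f τ * Real.exp (-lam * τ) - lam * (f τ * Real.exp (-lam * τ))) = 0 := by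
    refine integral_eq_zero_of_hasDerivAt_of_integrable (fun τ => ?_) (iD.sub (iA.const_mul lam)) iA
    have h1 := (fC.differentiable one_ne_zero τ).hasDerivAt
    have h2 : HasDerivAt (fun τ => Real.exp (-lam * τ)) (Real.exp (-lam * τ) * (-lam * 1)) τ :=
      ((hasDerivAt_id τ).const_mul (-lam)).exp
    exact (h1.mul h2).congr_deriv (by ring)
  rw [integral_sub iD (iA.const_mul lam), integral_const_mul, sub_eq_zero] at parts
  have young : ∫ τ, deriv f τ * Real.exp (-lam * τ) ≤
      ∫ τ, (lam * (1 - 1 / p) * (f τ * Real.exp (-lam * τ)) +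
        lam * (1 / p) * (p / lam) ^ p * (|deriv h τ| ^ p * Real.exp (-lam * τ))) := by
    refine integral_mono iD ((iA.const_mul _).add (iB.const_mul _)) fun τ => ?_
    have y := mul_le_mul_of_nonneg_left (rpow_sub_one_mul_le (abs_nonneg (h τ))
      (abs_nonneg (deriv h τ)) (by positivity : 0 ≤ p / lam) hp) hlam.le
    have e : lam * (|h τ| ^ (p - 1) * (p / lam * |deriv h τ|)) =
        p * |h τ| ^ (p - 1) * |deriv h τ| := by field_simp
    have := mul_le_mul_of_nonneg_right ((hle τ).trans (e ▸ y)) (Real.exp_pos (-lam * τ)).le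
    refine this.trans_eq ?_
    simp only [hf]
    ring
  rw [integral_add (iA.const_mul _) (iB.const_mul _), integral_const_mul, integral_const_mul,
    parts] at young
  set A := ∫ τ, f τ * Real.exp (-lam * τ)
  set B := ∫ τ, |deriv h τ| ^ p * Real.exp (-lam * τ)
  have hpos : 0 < lam * (1 / p) := by positivity
  refine le_of_mul_le_mul_left ?_ hpos
  linarith

/-- Continuity in the exponent, parametrized as `1 + s ^ 2` so that it stays positive. -/
lemma continuous_integral_abs_rpow_mul_exp {f : ℝ → ℝ} (hc : Continuous f)
    (hf : HasCompactSupport f) (lam : ℝ) :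
    Continuous (fun s : ℝ => ∫ τ, |f τ| ^ (1 + s ^ 2) * Real.exp (-lam * τ)) := by
  have key : Continuous (fun s : ℝ =>
      ∫ τ in tsupport f, |f τ| ^ (1 + s ^ 2) * Real.exp (-lam * τ)) := by
    refine continuous_parametric_integral_of_continuous ?_ hf
    refine Continuous.mul (Continuous.rpow (by fun_prop) (by fun_prop) fun x => Or.inr ?_)
      (by fun_prop)
    positivity
  refine key.congr fun s => setIntegral_eq_integral_of_forall_compl_eq_zero fun τ hτ => ?_
  have hs : 1 + s ^ 2 ≠ 0 := by positivity
  simp [image_eq_zero_of_notMem_tsupport hτ, Real.zero_rpow hs]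

/-- Hardy-type inequality with exponential weight on ℝ (inequality (4.11)). -/
theorem stmt_5 (h : ℝ → ℝ) (hsmooth : ContDiff ℝ (⊤ : ℕ∞) h) (hsupp : HasCompactSupport h)
    (lam : ℝ) (hlam : 0 < lam) (p : ℝ) (hp : 1 ≤ p) :
    ∫ τ, |h τ| ^ p * Real.exp (-lam * τ) ≤
      (p / lam) ^ p * ∫ τ, |deriv h τ| ^ p * Real.exp (-lam * τ) := by
  have h1 : ContDiff ℝ 1 h := hsmooth.of_le (by exact_mod_cast le_top)
  rcases hp.lt_or_eq with hp | rfl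
  · exact hardy_exp_of_one_lt h h1 hsupp lam hlam p hp
  have cL := continuous_integral_abs_rpow_mul_exp h1.continuous hsupp lam
  have cR := continuous_integral_abs_rpow_mul_exp (h1.continuous_deriv le_rfl) hsupp.deriv lam
  have cc : Continuous (fun s : ℝ => ((1 + s ^ 2) / lam) ^ (1 + s ^ 2)) :=
    Continuous.rpow (by fun_prop) (by fun_prop) fun s => Or.inr (by positivity)
  have := le_on_closure (s := ({0}ᶜ : Set ℝ)) (fun s hs =>
    hardy_exp_of_one_lt h h1 hsupp lam hlam (1 + s ^ 2)
      (lt_add_of_pos_right 1 (sq_pos_of_ne_zero hs)))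
    cL.continuousOn (cc.mul cR).continuousOn
    (x := 0) ((dense_compl_singleton (0 : ℝ)) 0)
  simpa using this
end

section
/- Directional Hardy-type inequality with exponential weight on ℝ^d: Let d ≥ 1 be an integer, let e ∈ ℝ^d be a unit vector, let λ > 0, and let 1 ≤ p < ∞. Then for every smooth compactly supported function φ : ℝ^d → ℝ, ∫_{ℝ^d} |φ(x)|^p e^{−λ⟨x,e⟩} dx ≤ (p/λ)^p ∫_{ℝ^d} |⟨∇φ(x), e⟩|^p e^{−λ⟨x,e⟩} dx. -/
open MeasureTheory
open scoped RealInnerProductSpace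

/-!
The proof compares `φ` with its translate by `t • e` and lets `t → 0⁺`. Write
`w x = exp (-λ⟪x, e⟫)`, `I = ∫ |φ|^p w`, `D x = (φ x - φ (x - t • e)) / t` and `a = exp (-λt/p)`.
Since `w (x + t • e) = a ^ p * w x`, the translate `φ (· - t • e)` has weighted integral `a ^ p * I`.
Convexity of `s ↦ s ^ p` gives, for `u = φ (x - t • e)` and `v = t * D x`,
`|u + v| ^ p ≤ a ^ (1 - p) * |u| ^ p + (1 - a) ^ (1 - p) * |v| ^ p` (`abs_add_rpow_le`).
Integrating and absorbing `a * I` on the left yields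
`I ≤ (t / (1 - a)) ^ p * ∫ |D|^p w` (`difference_hardy`). As `t → 0⁺`, `t / (1 - a) → p / λ`, and
the right-hand integral converges by dominated convergence, `φ` being Lipschitz with compact
support. No derivative of `|φ| ^ p` is taken, so `p = 1` needs no separate argument.
-/

/-- Convexity of `s ↦ s ^ p` at `|u| + |v| = a * (|u| / a) + (1 - a) * (|v| / (1 - a))`. -/
lemma abs_add_rpow_le {p a : ℝ} (hp : 1 ≤ p) (ha : 0 < a) (ha1 : a < 1) (u v : ℝ) :
    |u + v| ^ p ≤ a ^ (1 - p) * |u| ^ p + (1 - a) ^ (1 - p) * |v| ^ p := by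
  have hb : 0 < 1 - a := by linarith
  have key := (convexOn_rpow hp).2 (x := |u| / a) (y := |v| / (1 - a))
    (Set.mem_Ici.2 (by positivity)) (Set.mem_Ici.2 (by positivity)) ha.le hb.le (by ring)
  simp only [smul_eq_mul] at key
  rw [mul_div_cancel₀ _ ha.ne', mul_div_cancel₀ _ hb.ne', Real.div_rpow (abs_nonneg _) ha.le,
    Real.div_rpow (abs_nonneg _) hb.le] at key
  calc |u + v| ^ p ≤ (|u| + |v|) ^ p :=
        Real.rpow_le_rpow (abs_nonneg _) (abs_add_le u v) (by linarith)
    _ ≤ _ := key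
    _ = _ := by
        rw [Real.rpow_sub ha, Real.rpow_sub hb, Real.rpow_one, Real.rpow_one]
        ring

/-- The weight `exp (-λ⟪x, e⟫)` keeps the `p`-th power of a compactly supported continuous
function integrable. -/
lemma integrable_rpow_weight {d : ℕ} (e : EuclideanSpace ℝ (Fin d)) (lam : ℝ) {p : ℝ}
    (hp : 1 ≤ p) {f : EuclideanSpace ℝ (Fin d) → ℝ} (hf : Continuous f)
    (hs : HasCompactSupport f) :
    Integrable (fun x => |f x| ^ p * Real.exp (-lam * ⟪x, e⟫)) := by
  have hp0 : 0 < p := by linarith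
  refine Continuous.integrable_of_hasCompactSupport ?_ ?_
  · exact (hf.abs.rpow_const fun _ => Or.inr hp0.le).mul (by fun_prop)
  · refine hs.mono fun x hx => ?_
    contrapose! hx
    have : f x = 0 := by simpa using hx
    simp [this, Real.zero_rpow hp0.ne']

/-- The inequality with a finite difference quotient in place of the directional derivative. -/
lemma difference_hardy {d : ℕ} {e : EuclideanSpace ℝ (Fin d)} (he : ‖e‖ = 1)
    {lam : ℝ} (hlam : 0 < lam) {p : ℝ} (hp : 1 ≤ p)
    {φ : EuclideanSpace ℝ (Fin d) → ℝ} (hφ : Continuous φ)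
    (hsupp : HasCompactSupport φ) {t : ℝ} (ht : 0 < t) :
    ∫ x, |φ x| ^ p * Real.exp (-lam * ⟪x, e⟫) ≤
      (t / (1 - Real.exp (-lam * t / p))) ^ p *
        ∫ x, |(φ x - φ (x - t • e)) / t| ^ p * Real.exp (-lam * ⟪x, e⟫) := by
  have hp0 : 0 < p := by linarith
  set a := Real.exp (-lam * t / p) with ha_def
  have ha : 0 < a := Real.exp_pos _
  have ha1 : a < 1 := by
    rw [ha_def, ← Real.exp_zero, Real.exp_lt_exp]
    refine div_neg_of_neg_of_pos ?_ hp0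
    nlinarith [mul_pos hlam ht]
  have hb : 0 < 1 - a := by linarith
  have hap : a ^ p = Real.exp (-lam * t) := by
    rw [ha_def, ← Real.exp_mul, div_mul_cancel₀ _ hp0.ne']
  have hτ : Continuous fun x => φ (x - t • e) := hφ.comp (continuous_id.sub continuous_const)
  have hτs : HasCompactSupport fun x => φ (x - t • e) :=
    hsupp.comp_homeomorph (Homeomorph.subRight (t • e))
  have hD : Continuous fun x => (φ x - φ (x - t • e)) / t := (hφ.sub hτ).div_const t
  have hDs : HasCompactSupport fun x => (φ x - φ (x - t • e)) / t := by
    have h := (hsupp.sub hτs).mul_right (f' := fun _ => t⁻¹)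
    exact h
  have i0 := integrable_rpow_weight e lam hp hφ hsupp
  have i1 := integrable_rpow_weight e lam hp hτ hτs
  have i2 := integrable_rpow_weight e lam hp hD hDs
  have shift : ∫ x, |φ (x - t • e)| ^ p * Real.exp (-lam * ⟪x, e⟫) =
      a ^ p * ∫ x, |φ x| ^ p * Real.exp (-lam * ⟪x, e⟫) := by
    rw [← integral_const_mul, ← integral_add_right_eq_self _ (t • e)]
    refine integral_congr_ae (Filter.Eventually.of_forall fun x => ?_)
    have hin : ⟪x + t • e, e⟫ = ⟪x, e⟫ + t := by
      rw [inner_add_left, real_inner_smul_left, real_inner_self_eq_norm_sq, he]; ring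
    simp only [add_sub_cancel_right, hin, hap, mul_add, Real.exp_add]
    ring
  set I := ∫ x, |φ x| ^ p * Real.exp (-lam * ⟪x, e⟫)
  set J := ∫ x, |(φ x - φ (x - t • e)) / t| ^ p * Real.exp (-lam * ⟪x, e⟫)
  have main : I ≤ a ^ (1 - p) * (a ^ p * I) + (1 - a) ^ (1 - p) * t ^ p * J := by
    rw [← shift, ← integral_const_mul, ← integral_const_mul,
      ← integral_add (i1.const_mul _) (i2.const_mul _)]
    refine integral_mono i0 ((i1.const_mul _).add (i2.const_mul _)) fun x => ?_
    have h := abs_add_rpow_le hp ha ha1 (φ (x - t • e)) (t * ((φ x - φ (x - t • e)) / t))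
    rw [mul_div_cancel₀ _ ht.ne', add_sub_cancel] at h
    have h2 : |φ x - φ (x - t • e)| ^ p = t ^ p * |(φ x - φ (x - t • e)) / t| ^ p := by
      rw [← Real.mul_rpow ht.le (abs_nonneg _), abs_div, abs_of_pos ht, mul_div_cancel₀ _ ht.ne']
    rw [h2] at h
    have := mul_le_mul_of_nonneg_right h (Real.exp_pos (-lam * ⟪x, e⟫)).le
    beta_reduce
    linarith
  rw [← mul_assoc, ← Real.rpow_add ha, sub_add_cancel, Real.rpow_one, Real.rpow_sub hb,
    Real.rpow_one] at main
  rw [Real.div_rpow ht.le hb.le]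
  have hbp : 0 < (1 - a) ^ p := Real.rpow_pos_of_pos hb p
  have h3 : (1 - a) * I ≤ (1 - a) * (t ^ p / (1 - a) ^ p * J) := by
    calc (1 - a) * I ≤ (1 - a) / (1 - a) ^ p * t ^ p * J := by linarith
      _ = _ := by ring
  exact le_of_mul_le_mul_left h3 hb

lemma tendsto_div_one_sub_exp {lam p : ℝ} (hlam : 0 < lam) (hp : 0 < p) :
    Filter.Tendsto (fun t : ℝ => t / (1 - Real.exp (-lam * t / p)))
      (nhdsWithin 0 (Set.Ioi 0)) (nhds (p / lam)) := by
  have h : HasDerivAt (fun t : ℝ => 1 - Real.exp (-lam * t / p)) (lam / p) 0 := by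
    have h1 : HasDerivAt (fun t : ℝ => -lam * t / p) (-lam / p) 0 := by
      simpa using ((hasDerivAt_id (0 : ℝ)).const_mul (-lam)).div_const p
    have := h1.exp.const_sub 1
    simpa [neg_div] using this
  have h2 := h.tendsto_slope_zero_right.inv₀ (by positivity)
  simpa [div_eq_mul_inv, mul_comm] using h2

/-- The `L^p` mass of the backward difference quotients converges to that of `⟪∇φ, e⟫`; all
quotients with `t ≤ 1` live in the closed unit neighbourhood of the support of `φ`. -/
lemma tendsto_difference_integral {d : ℕ} {e : EuclideanSpace ℝ (Fin d)} (he : ‖e‖ = 1)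
    (lam : ℝ) {p : ℝ} (hp : 1 ≤ p)
    {φ : EuclideanSpace ℝ (Fin d) → ℝ} (hφ : ContDiff ℝ 1 φ) (hsupp : HasCompactSupport φ) :
    Filter.Tendsto
      (fun t : ℝ => ∫ x, |(φ x - φ (x - t • e)) / t| ^ p * Real.exp (-lam * ⟪x, e⟫))
      (nhdsWithin 0 (Set.Ioi 0))
      (nhds (∫ x, |⟪gradient φ x, e⟫| ^ p * Real.exp (-lam * ⟪x, e⟫))) := by
  have hp0 : 0 < p := by linarith
  obtain ⟨C, hC⟩ := hφ.lipschitzWith_of_hasCompactSupport hsupp one_ne_zero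
  set K := Metric.cthickening 1 (tsupport φ)
  have hK : IsCompact K := IsCompact.cthickening hsupp
  refine tendsto_integral_filter_of_dominated_convergence
    (K.indicator fun x => (C : ℝ) ^ p * Real.exp (-lam * ⟪x, e⟫)) ?_ ?_ ?_ ?_
  · refine Filter.Eventually.of_forall fun t => Continuous.aestronglyMeasurable ?_
    have hc := hφ.continuous
    refine Continuous.mul (Continuous.rpow_const ?_ fun _ => Or.inr hp0.le) (by fun_prop)
    exact ((hc.sub (hc.comp (continuous_id.sub continuous_const))).div_const t).abs
  · filter_upwards [Ioc_mem_nhdsGT (zero_lt_one' ℝ)] with t ht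
    refine Filter.Eventually.of_forall fun x => ?_
    rw [Real.norm_of_nonneg (by positivity)]
    have hdist : dist x (x - t • e) = t := by
      rw [dist_eq_norm, sub_sub_cancel, norm_smul, he, Real.norm_of_nonneg ht.1.le, mul_one]
    by_cases hx : x ∈ K
    · rw [Set.indicator_of_mem hx]
      gcongr
      rw [abs_div, abs_of_pos ht.1, div_le_iff₀ ht.1, ← Real.dist_eq]
      exact (hC.dist_le_mul x (x - t • e)).trans_eq (by rw [hdist])
    · have h1 : φ x = 0 := image_eq_zero_of_notMem_tsupport fun h =>
        hx (Metric.self_subset_cthickening _ h)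
      have h2 : φ (x - t • e) = 0 := image_eq_zero_of_notMem_tsupport fun h =>
        hx (Metric.mem_cthickening_of_dist_le x _ _ _ h (hdist.le.trans ht.2))
      simp [h1, h2, hx, Real.zero_rpow hp0.ne']
  · rw [integrable_indicator_iff hK.measurableSet]
    exact ContinuousOn.integrableOn_compact hK (by fun_prop)
  · refine Filter.Eventually.of_forall fun x => ?_
    refine Filter.Tendsto.mul_const _ (Filter.Tendsto.rpow_const ?_ (Or.inr hp0.le))
    have hdiff : DifferentiableAt ℝ φ x := (hφ.differentiable one_ne_zero) x
    have hgrad : ⟪gradient φ x, e⟫ = fderiv ℝ φ x e := by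
      rw [gradient, InnerProductSpace.toDual_symm_apply]
    have h := ((hdiff.hasFDerivAt.hasLineDerivAt (-e)).tendsto_slope_zero_right).neg
    rw [map_neg, neg_neg, ← hgrad] at h
    refine (h.congr fun t => ?_).abs
    simp only [smul_eq_mul, smul_neg, ← sub_eq_add_neg]
    ring

/-- Directional Hardy-type inequality with exponential weight on ℝ^d. -/
theorem stmt_6 (d : ℕ) (hd : 1 ≤ d) (e : EuclideanSpace ℝ (Fin d)) (he : ‖e‖ = 1)
    (lam : ℝ) (hlam : 0 < lam) (p : ℝ) (hp : 1 ≤ p)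
    (φ : EuclideanSpace ℝ (Fin d) → ℝ) (hφ : ContDiff ℝ (⊤ : ℕ∞) φ)
    (hsupp : HasCompactSupport φ) :
    ∫ x, |φ x| ^ p * Real.exp (-lam * ⟪x, e⟫) ≤
      (p / lam) ^ p * ∫ x, |⟪gradient φ x, e⟫| ^ p * Real.exp (-lam * ⟪x, e⟫) := by
  have hp0 : 0 < p := by linarith
  have hφ1 : ContDiff ℝ 1 φ := hφ.of_le (by exact_mod_cast le_top)
  refine ge_of_tendsto
    (((tendsto_div_one_sub_exp hlam hp0).rpow_const (Or.inr hp0.le)).mul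
      (tendsto_difference_integral he lam hp hφ1 hsupp)) ?_
  filter_upwards [self_mem_nhdsWithin] with t ht
  exact difference_hardy he hlam hp hφ.continuous hsupp ht
end

section
/- Euclidean codimension-one slice estimate for divergence-free vector fields (Euclidean model of Proposition 4.2): Let m ≥ 2 be an integer. There exists a constant C > 0, depending only on m, such that the following holds. Let f = (f^1, …, f^m) : ℝ^m → ℝ^m be a smooth vector field with ∑_{i=1}^m ∂f^i/∂x^i = 0 on ℝ^m, with ∫_{ℝ^m} |f| dx < ∞ and ∫_{ℝ^{m−1}} |f(x′, 0)| dx′ < ∞. Then for every smooth compactly supported function Φ : ℝ^{m−1} → ℝ, | ∫_{ℝ^{m−1}} f^m(x′, 0) Φ(x′) dx′ | ≤ C ( ∫_{ℝ^{m−1}} |f(x′, 0)| dx′ )^{1 − 1/m} ( ∫_{ℝ^m} |f(x)| dx )^{1/m} ( ‖Φ‖_{L^m(ℝ^{m−1})} + ‖∇Φ‖_{L^m(ℝ^{m−1})} ). -/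
open MeasureTheory

/-- The embedding ℝ^{m−1} → ℝ^m, `x′ ↦ (x′, 0)`, written with `m = d + 1`. -/
noncomputable def sliceEmbed (d : ℕ) (x' : EuclideanSpace ℝ (Fin d)) :
    EuclideanSpace ℝ (Fin (d + 1)) :=
  (EuclideanSpace.equiv (Fin (d + 1)) ℝ).symm
    (Fin.snoc (EuclideanSpace.equiv (Fin d) ℝ x') (0 : ℝ))

/-!
Write `m = d + 1`, `A = ∫ |f(x', 0)| dx'`, `B = ∫ |f| dx`, and `G` for the `L^m` norm of `∇Φ`. Let
`Φ_s(x)` be the average of `Φ` over the ball of radius `s` around `x`. Since `m > d`, Hölder's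
inequality (here Jensen's, against the uniform measure of a ball) gives
* `|∇Φ_s| ≤ c s^{-d/m} G = c s^{1/m - 1} G` (`norm_fderiv_ballAvg_le`), and in the same way
  `|∂_s Φ_s| ≤ c s^{1/m - 1} G`, whence `|Φ_s - Φ| ≤ m c s^{1/m} G` after integration in `s`
  (`abs_ballAvg_sub_le`).

For a compactly supported `C¹` function `Ψ`, the flux `F(t) = ∫ f^m(x', t) Ψ(x') dx'` satisfies
`F'(t) = ∑_i ∫ f^i(x', t) ∂_i Ψ(x') dx'` because `f` is divergence-free. By Fubini, `F` and `F'` are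
integrable on `(0, ∞)`, so `|F(0)| ≤ ∫ |F'| ≤ d ‖∇Ψ‖_∞ B` (`abs_flux_le`).

Splitting `Φ = (Φ - Φ_s) + Φ_s` bounds the left-hand side by
`A · m c s^{1/m} G + d c s^{1/m - 1} G · B`, and the choice `s = B / A` gives a multiple of
`A^{1 - 1/m} B^{1/m} G`. The cases `A = 0` and `B = 0` are degenerate: both sides vanish. The term
`‖Φ‖_{L^m}` on the right is not needed.
-/

/-! ### Averages over balls -/

/-- The uniform probability measure on the unit ball of `ℝ^d`. -/
noncomputable def unitBallMeasure (d : ℕ) : Measure (EuclideanSpace ℝ (Fin d)) :=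
  ProbabilityTheory.cond volume (Metric.ball 0 1)

/-- The average of `Φ` over the ball of radius `|s|` centred at `x`. It is written with the fixed
measure on the unit ball, so that it is differentiable in `s` as well as in `x`; at `s = 0` it
equals `Φ x`. -/
noncomputable def ballAvg {d : ℕ} (Φ : EuclideanSpace ℝ (Fin d) → ℝ) (s : ℝ)
    (x : EuclideanSpace ℝ (Fin d)) : ℝ :=
  ∫ y, Φ (x - s • y) ∂(unitBallMeasure d)

instance (d : ℕ) : IsProbabilityMeasure (unitBallMeasure d) :=
  ProbabilityTheory.cond_isProbabilityMeasure_of_finite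
    (Metric.measure_ball_pos _ _ one_pos).ne' measure_ball_lt_top.ne

theorem ae_norm_le_one (d : ℕ) : ∀ᵐ y ∂(unitBallMeasure d), ‖y‖ ≤ 1 := by
  have := ProbabilityTheory.ae_cond_mem (μ := (volume : Measure (EuclideanSpace ℝ (Fin d))))
    (s := Metric.ball 0 1) Metric.isOpen_ball.measurableSet
  filter_upwards [this] with y hy
  simpa using (mem_ball_zero_iff.1 hy).le

section Averages

variable {d : ℕ} {Φ : EuclideanSpace ℝ (Fin d) → ℝ}

theorem integrable_comp_line {F : Type*} [NormedAddCommGroup F]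
    {h : EuclideanSpace ℝ (Fin d) → F} (hh : Continuous h) (hc : HasCompactSupport h)
    (x : EuclideanSpace ℝ (Fin d)) (s : ℝ) :
    Integrable (fun y => h (x - s • y)) (unitBallMeasure d) := by
  obtain ⟨M, hM⟩ := hc.exists_bound_of_continuous hh
  exact Integrable.of_bound (C := M)
    (by fun_prop : Continuous fun y => h (x - s • y)).aestronglyMeasurable (by simp [hM])

theorem hasFDerivAt_ballAvg (hΦ : ContDiff ℝ 1 Φ) (hc : HasCompactSupport Φ) (s : ℝ)
    (x : EuclideanSpace ℝ (Fin d)) :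
    HasFDerivAt (ballAvg Φ s) (∫ y, fderiv ℝ Φ (x - s • y) ∂(unitBallMeasure d)) x := by
  have hcont : Continuous (fderiv ℝ Φ) := hΦ.continuous_fderiv one_ne_zero
  obtain ⟨M, hM⟩ := (hc.fderiv ℝ).exists_bound_of_continuous hcont
  refine hasFDerivAt_integral_of_dominated_of_fderiv_le (bound := fun _ => M)
    (F' := fun x y => fderiv ℝ Φ (x - s • y)) Filter.univ_mem
    (.of_forall fun z => (integrable_comp_line hΦ.continuous hc z s).aestronglyMeasurable)
    (integrable_comp_line hΦ.continuous hc x s)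
    (integrable_comp_line hcont (hc.fderiv ℝ) x s).aestronglyMeasurable
    (.of_forall fun y z _ => hM _) (integrable_const _) (.of_forall fun y z _ => ?_)
  have h1 := (hΦ.differentiable one_ne_zero (z - s • y)).hasFDerivAt
  simpa using! h1.comp z ((hasFDerivAt_id z).sub_const (s • y))

theorem contDiff_ballAvg (hΦ : ContDiff ℝ 1 Φ) (hc : HasCompactSupport Φ) (s : ℝ) :
    ContDiff ℝ 1 (ballAvg Φ s) := by
  have hcont : Continuous (fderiv ℝ Φ) := hΦ.continuous_fderiv one_ne_zero
  obtain ⟨M, hM⟩ := (hc.fderiv ℝ).exists_bound_of_continuous hcont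
  rw [contDiff_one_iff_fderiv]
  refine ⟨fun x => (hasFDerivAt_ballAvg hΦ hc s x).differentiableAt, ?_⟩
  rw [funext fun x => (hasFDerivAt_ballAvg hΦ hc s x).fderiv]
  refine continuous_of_dominated (bound := fun _ => M)
    (fun z => (integrable_comp_line hcont (hc.fderiv ℝ) z s).aestronglyMeasurable)
    (fun z => .of_forall fun y => hM _) (integrable_const _) (.of_forall fun y => by fun_prop)

theorem hasCompactSupport_ballAvg (hc : HasCompactSupport Φ) (s : ℝ) :
    HasCompactSupport (ballAvg Φ s) := by
  refine HasCompactSupport.intro (K := Metric.cthickening |s| (tsupport Φ))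
    (IsCompact.cthickening hc) fun x hx => ?_
  refine integral_eq_zero_of_ae ?_
  filter_upwards [ae_norm_le_one d] with y hy
  by_contra hne
  refine hx (Metric.mem_cthickening_of_dist_le x (x - s • y) _ _
    (subset_tsupport _ hne) ?_)
  rw [dist_eq_norm, sub_sub_cancel, norm_smul, Real.norm_eq_abs]
  exact mul_le_of_le_one_right (abs_nonneg s) hy

theorem hasDerivAt_ballAvg (hΦ : ContDiff ℝ 1 Φ) (hc : HasCompactSupport Φ) (s : ℝ)
    (x : EuclideanSpace ℝ (Fin d)) :
    HasDerivAt (fun r => ballAvg Φ r x)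
      (∫ y, -fderiv ℝ Φ (x - s • y) y ∂(unitBallMeasure d)) s := by
  have hcont : Continuous (fderiv ℝ Φ) := hΦ.continuous_fderiv one_ne_zero
  obtain ⟨M, hM⟩ := (hc.fderiv ℝ).exists_bound_of_continuous hcont
  refine (hasDerivAt_integral_of_dominated_loc_of_deriv_le (bound := fun _ => M)
    (F' := fun s y => -fderiv ℝ Φ (x - s • y) y) Filter.univ_mem
    (.of_forall fun z => (integrable_comp_line hΦ.continuous hc x z).aestronglyMeasurable)
    (integrable_comp_line hΦ.continuous hc x s)
    (by fun_prop : Continuous fun y => -fderiv ℝ Φ (x - s • y) y).aestronglyMeasurable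
    ?_ (integrable_const _) (.of_forall fun y z _ => ?_)).2
  · filter_upwards [ae_norm_le_one d] with y hy z _
    rw [norm_neg]
    refine (ContinuousLinearMap.le_opNorm _ _).trans ?_
    exact (mul_le_of_le_one_right (norm_nonneg _) hy).trans (hM _)
  · have h1 := (hΦ.differentiable one_ne_zero (x - z • y)).hasFDerivAt
    have h2 : HasDerivAt (fun z : ℝ => x - z • y) (-y) z := by
      simpa using ((hasDerivAt_id z).smul_const y).const_sub x
    rw [← map_neg]
    exact h1.comp_hasDerivAt z h2

/-- Averages of `h` at scale `s` are controlled by the `L^p` norm of `h`: Jensen's inequality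
followed by the change of variables `z = x - s y`. -/
theorem integral_comp_line_le {h : EuclideanSpace ℝ (Fin d) → ℝ} (hh : Continuous h)
    (hc : HasCompactSupport h) (h0 : ∀ x, 0 ≤ h x) {p : ℝ} (hp : 1 ≤ p)
    (x : EuclideanSpace ℝ (Fin d)) {s : ℝ} (hs : 0 < s) :
    ∫ y, h (x - s • y) ∂(unitBallMeasure d) ≤
      ((volume.real (Metric.ball (0 : EuclideanSpace ℝ (Fin d)) 1))⁻¹) ^ (1 / p) *
        s ^ (-(d / p)) * (∫ x, h x ^ p) ^ (1 / p) := by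
  have hp0 : 0 < p := by linarith
  have hhp : Continuous fun x => h x ^ p := hh.rpow_const fun _ => Or.inr hp0.le
  have hcp : HasCompactSupport fun x => h x ^ p :=
    hc.comp_left (g := fun t : ℝ => t ^ p) (Real.zero_rpow hp0.ne')
  have hpos : ∀ x, 0 ≤ h x ^ p := fun x => Real.rpow_nonneg (h0 x) _
  have hJ := (convexOn_rpow hp).map_integral_le (μ := unitBallMeasure d)
    (f := fun y => h (x - s • y))
    (Real.continuous_rpow_const hp0.le).continuousOn isClosed_Ici (.of_forall fun y => h0 _)
    (integrable_comp_line hh hc x s) (integrable_comp_line hhp hcp x s)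
  have hint : Integrable (fun y => h (x - s • y) ^ p) := by
    have := (hhp.integrable_of_hasCompactSupport hcp (μ := volume)).comp_sub_left x
    exact this.comp_smul hs.ne'
  have hcv : ∫ y, h (x - s • y) ^ p = s ^ (-(d : ℝ)) * ∫ y, h y ^ p := by
    rw [Measure.integral_comp_smul volume (fun z => h (x - z) ^ p) s,
      integral_sub_left_eq_self (fun z => h z ^ p), finrank_euclideanSpace_fin, smul_eq_mul,
      abs_of_nonneg (by positivity), Real.rpow_neg hs.le, Real.rpow_natCast]
  have hle : ∫ y, h (x - s • y) ^ p ∂(unitBallMeasure d) ≤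
      (volume.real (Metric.ball (0 : EuclideanSpace ℝ (Fin d)) 1))⁻¹ *
        (s ^ (-(d : ℝ)) * ∫ y, h y ^ p) := by
    rw [unitBallMeasure, ProbabilityTheory.cond, integral_smul_measure, ENNReal.toReal_inv,
      smul_eq_mul, ← hcv]
    refine mul_le_mul_of_nonneg_left ?_ (by positivity)
    exact setIntegral_le_integral hint (.of_forall fun y => hpos _)
  have hI : 0 ≤ ∫ y, h (x - s • y) ∂(unitBallMeasure d) := integral_nonneg fun y => h0 _
  have hG : 0 ≤ ∫ y, h y ^ p := integral_nonneg fun y => hpos _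
  calc ∫ y, h (x - s • y) ∂(unitBallMeasure d)
      = ((∫ y, h (x - s • y) ∂(unitBallMeasure d)) ^ p) ^ (1 / p) := by
        rw [← Real.rpow_mul hI, mul_one_div_cancel hp0.ne', Real.rpow_one]
    _ ≤ ((volume.real (Metric.ball (0 : EuclideanSpace ℝ (Fin d)) 1))⁻¹ *
        (s ^ (-(d : ℝ)) * ∫ y, h y ^ p)) ^ (1 / p) :=
        Real.rpow_le_rpow (by positivity) (hJ.trans hle) (by positivity)
    _ = _ := by
        rw [Real.mul_rpow (by positivity) (by positivity), Real.mul_rpow (by positivity) hG,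
          ← Real.rpow_mul hs.le]
        ring_nf

theorem norm_fderiv_ballAvg_le (hΦ : ContDiff ℝ 1 Φ) (hc : HasCompactSupport Φ) {p : ℝ}
    (hp : 1 ≤ p) {s : ℝ} (hs : 0 < s) (x : EuclideanSpace ℝ (Fin d)) :
    ‖fderiv ℝ (ballAvg Φ s) x‖ ≤
      ((volume.real (Metric.ball (0 : EuclideanSpace ℝ (Fin d)) 1))⁻¹) ^ (1 / p) *
        s ^ (-(d / p)) * (∫ x, ‖fderiv ℝ Φ x‖ ^ p) ^ (1 / p) := by
  rw [(hasFDerivAt_ballAvg hΦ hc s x).fderiv]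
  exact (norm_integral_le_integral_norm _).trans
    (integral_comp_line_le (hΦ.continuous_fderiv one_ne_zero).norm (hc.fderiv ℝ).norm
      (fun _ => norm_nonneg _) hp x hs)

/-- The Morrey-type estimate `|Φ - Φ_s| ≲ s^{1/(d+1)} ‖∇Φ‖_{L^{d+1}}`, obtained by integrating the
bound on `∂_s Φ_s`; the singularity `s^{-d/(d+1)}` at `s = 0` is integrable. -/
theorem abs_ballAvg_sub_le (hΦ : ContDiff ℝ 1 Φ) (hc : HasCompactSupport Φ) {s : ℝ} (hs : 0 < s)
    (x : EuclideanSpace ℝ (Fin d)) :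
    |ballAvg Φ s x - Φ x| ≤
      (d + 1) * (((volume.real (Metric.ball (0 : EuclideanSpace ℝ (Fin d)) 1))⁻¹) ^
        (1 / (d + 1 : ℝ)) * (∫ x, ‖fderiv ℝ Φ x‖ ^ (d + 1 : ℝ)) ^ (1 / (d + 1 : ℝ))) *
          s ^ (1 / (d + 1 : ℝ)) := by
  set K := ((volume.real (Metric.ball (0 : EuclideanSpace ℝ (Fin d)) 1))⁻¹) ^ (1 / (d + 1 : ℝ)) *
        (∫ x, ‖fderiv ℝ Φ x‖ ^ (d + 1 : ℝ)) ^ (1 / (d + 1 : ℝ)) with hK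
  have hd : (0 : ℝ) < d + 1 := by positivity
  have hcont : Continuous (fderiv ℝ Φ) := hΦ.continuous_fderiv one_ne_zero
  have hderiv : ∀ r, 0 < r →
      |∫ y, -fderiv ℝ Φ (x - r • y) y ∂(unitBallMeasure d)| ≤ K * r ^ (1 / (d + 1 : ℝ) - 1) := by
    intro r hr
    have h1 := integral_comp_line_le hcont.norm (hc.fderiv ℝ).norm (fun _ => norm_nonneg _)
      (p := d + 1) (by simp) x hr
    have h2 : |∫ y, -fderiv ℝ Φ (x - r • y) y ∂(unitBallMeasure d)| ≤
        ∫ y, ‖fderiv ℝ Φ (x - r • y)‖ ∂(unitBallMeasure d) := by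
      rw [← Real.norm_eq_abs]
      refine norm_integral_le_of_norm_le
        (integrable_comp_line hcont.norm (hc.fderiv ℝ).norm x r) ?_
      filter_upwards [ae_norm_le_one d] with y hy
      rw [norm_neg]
      exact ((fderiv ℝ Φ (x - r • y)).le_opNorm y).trans
        (mul_le_of_le_one_right (norm_nonneg _) hy)
    refine (h2.trans h1).trans (le_of_eq ?_)
    have : -((d : ℝ) / (d + 1)) = 1 / (d + 1 : ℝ) - 1 := by field_simp; ring
    rw [hK, this]; ring
  -- Both signs of the difference are handled by monotonicity of `(d+1) K r^{1/(d+1)} - σ Φ_r(x)`,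
  -- which only needs the derivative at interior points `r > 0`.
  have key : ∀ σ : ℝ, |σ| = 1 → σ * (ballAvg Φ s x - Φ x) ≤
      (d + 1) * K * s ^ (1 / (d + 1 : ℝ)) := by
    intro σ hσ
    have hH : ∀ r, 0 < r → HasDerivAt
        (fun r => (d + 1) * K * r ^ (1 / (d + 1 : ℝ)) - σ * ballAvg Φ r x)
        ((d + 1) * K * (1 / (d + 1 : ℝ) * r ^ (1 / (d + 1 : ℝ) - 1)) -
          σ * ∫ y, -fderiv ℝ Φ (x - r • y) y ∂(unitBallMeasure d)) r := fun r hr =>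
      ((Real.hasDerivAt_rpow_const (Or.inl hr.ne')).const_mul _).sub
        ((hasDerivAt_ballAvg hΦ hc r x).const_mul σ)
    have hmono : MonotoneOn (fun r => (d + 1) * K * r ^ (1 / (d + 1 : ℝ)) - σ * ballAvg Φ r x)
        (Set.Icc 0 s) := by
      refine monotoneOn_of_deriv_nonneg (convex_Icc 0 s) ?_ ?_ ?_
      · have hc1 : Continuous fun r => ballAvg Φ r x :=
          continuous_iff_continuousAt.2 fun r => (hasDerivAt_ballAvg hΦ hc r x).continuousAt
        have hc2 : Continuous fun r : ℝ => r ^ (1 / (d + 1 : ℝ)) :=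
          Real.continuous_rpow_const (by positivity)
        fun_prop
      · rw [interior_Icc]
        exact fun r hr => (hH r hr.1).differentiableAt.differentiableWithinAt
      · rw [interior_Icc]
        intro r hr
        rw [(hH r hr.1).deriv]
        have h3 : σ * ∫ y, -fderiv ℝ Φ (x - r • y) y ∂(unitBallMeasure d) ≤
            K * r ^ (1 / (d + 1 : ℝ) - 1) := by
          refine (le_abs_self _).trans ?_
          rw [abs_mul, hσ, one_mul]
          exact hderiv r hr.1
        have h4 : (d + 1) * K * (1 / (d + 1 : ℝ) * r ^ (1 / (d + 1 : ℝ) - 1)) =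
            K * r ^ (1 / (d + 1 : ℝ) - 1) := by field_simp
        linarith
    have := hmono (Set.left_mem_Icc.2 hs.le) (Set.right_mem_Icc.2 hs.le) hs.le
    have h0 : ballAvg Φ 0 x = Φ x := by simp [ballAvg]
    simp only [h0, Real.zero_rpow (by positivity : (1 / (d + 1 : ℝ)) ≠ 0), mul_zero] at this
    linarith
  rw [abs_le]
  constructor
  · linarith [key (-1) (by simp)]
  · linarith [key 1 (by simp)]

end Averages

/-! ### Flux through horizontal slices -/

section Flux

variable {d : ℕ}

@[simp] theorem sliceEmbed_castSucc (x : EuclideanSpace ℝ (Fin d)) (i : Fin d) :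
    sliceEmbed d x i.castSucc = x i := by
  simp [sliceEmbed]

@[simp] theorem sliceEmbed_last (x : EuclideanSpace ℝ (Fin d)) :
    sliceEmbed d x (Fin.last d) = 0 := by
  simp [sliceEmbed]

/-- `sliceEmbed` as a continuous linear map. -/
noncomputable def sliceCLM (d : ℕ) :
    EuclideanSpace ℝ (Fin d) →L[ℝ] EuclideanSpace ℝ (Fin (d + 1)) :=
  LinearMap.toContinuousLinearMap
    { toFun := sliceEmbed d
      map_add' := fun x y => by
        ext i
        refine Fin.lastCases ?_ (fun j => ?_) i <;> simp
      map_smul' := fun c x => by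
        ext i
        refine Fin.lastCases ?_ (fun j => ?_) i <;> simp }

/-- The point `(x', t)` of `ℝ^{d+1}`. -/
noncomputable def pt (x : EuclideanSpace ℝ (Fin d)) (t : ℝ) : EuclideanSpace ℝ (Fin (d + 1)) :=
  sliceCLM d x + t • EuclideanSpace.single (Fin.last d) 1

theorem pt_zero (x : EuclideanSpace ℝ (Fin d)) : pt x 0 = sliceEmbed d x := by
  simp [pt, sliceCLM]

theorem sliceCLM_single (i : Fin d) :
    sliceCLM d (EuclideanSpace.single i 1) = EuclideanSpace.single i.castSucc 1 := by
  ext j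
  refine Fin.lastCases ?_ (fun j => ?_) j <;>
    simp [sliceCLM, (Fin.castSucc_ne_last _).symm]

theorem continuous_pt : Continuous fun p : EuclideanSpace ℝ (Fin d) × ℝ => pt p.1 p.2 := by
  unfold pt; fun_prop

theorem measurePreserving_pt :
    MeasurePreserving (fun p : EuclideanSpace ℝ (Fin d) × ℝ => pt p.1 p.2)
      (volume.prod volume) volume := by
  have h1 := (PiLp.volume_preserving_ofLp (Fin d)).prod
    (MeasurePreserving.id (volume : Measure ℝ))
  have h2 : MeasurePreserving (Prod.swap : (Fin d → ℝ) × ℝ → ℝ × (Fin d → ℝ))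
    (volume.prod volume) (volume.prod volume) := Measure.measurePreserving_swap
  have h3 := (volume_preserving_piFinSuccAbove (fun _ : Fin (d + 1) => ℝ) (Fin.last d)).symm
  have h4 := PiLp.volume_preserving_toLp (Fin (d + 1))
  have h5 := h4.comp (h3.comp (h2.comp h1))
  refine (congrArg (fun g => MeasurePreserving g _ _) (funext fun p => ?_)).mp h5
  ext i
  refine Fin.lastCases ?_ (fun j => ?_) i <;>
    simp [pt, sliceCLM, Fin.castSucc_ne_last, MeasurableEquiv.piFinSuccAbove]

variable {f : EuclideanSpace ℝ (Fin (d + 1)) → EuclideanSpace ℝ (Fin (d + 1))}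
  {Ψ : EuclideanSpace ℝ (Fin d) → ℝ}

theorem contDiff_coord (hf : ContDiff ℝ (⊤ : ℕ∞) f) (i : Fin (d + 1)) :
    ContDiff ℝ 1 fun y => f y i := by
  have : ContDiff ℝ 1 f := hf.of_le (by exact_mod_cast le_top)
  exact (EuclideanSpace.proj (𝕜 := ℝ) i).contDiff.comp this

theorem hasDerivAt_flux (hf : ContDiff ℝ (⊤ : ℕ∞) f) (hΨ : Continuous Ψ)
    (hc : HasCompactSupport Ψ) (t : ℝ) :
    HasDerivAt (fun t => ∫ x, f (pt x t) (Fin.last d) * Ψ x)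
      (∫ x, fderiv ℝ (fun y => f y (Fin.last d)) (pt x t)
        (EuclideanSpace.single (Fin.last d) 1) * Ψ x) t := by
  have hg := contDiff_coord hf (Fin.last d)
  set g := fun y => f y (Fin.last d) with hgdef
  have hgc : Continuous g := hg.continuous
  have hg' : Continuous (fderiv ℝ g) := hg.continuous_fderiv one_ne_zero
  have hpt := continuous_pt (d := d)
  have hcontF' : Continuous fun p : EuclideanSpace ℝ (Fin d) × ℝ =>
      fderiv ℝ g (pt p.1 p.2) (EuclideanSpace.single (Fin.last d) 1) := by fun_prop
  have hpt' : ∀ t, Continuous fun x : EuclideanSpace ℝ (Fin d) => pt x t := fun t =>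
    hpt.comp (by fun_prop : Continuous fun x : EuclideanSpace ℝ (Fin d) => (x, t))
  have hF : ∀ t, Continuous fun x => g (pt x t) * Ψ x := fun t => (hgc.comp (hpt' t)).mul hΨ
  have hF' : Continuous fun x =>
      fderiv ℝ g (pt x t) (EuclideanSpace.single (Fin.last d) 1) * Ψ x :=
    (hcontF'.comp (by fun_prop : Continuous fun x : EuclideanSpace ℝ (Fin d) => (x, t))).mul hΨ
  obtain ⟨K, hK⟩ := ((hc : IsCompact (tsupport Ψ)).prod
    (isCompact_closedBall t 1)).exists_bound_of_continuousOn hcontF'.continuousOn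
  refine (hasDerivAt_integral_of_dominated_loc_of_deriv_le (bound := fun x => K * ‖Ψ x‖)
    (F' := fun t x => fderiv ℝ g (pt x t) (EuclideanSpace.single (Fin.last d) 1) * Ψ x)
    (Metric.closedBall_mem_nhds t one_pos)
    (.of_forall fun z => (hF z).aestronglyMeasurable)
    ((hF t).integrable_of_hasCompactSupport hc.mul_left)
    hF'.aestronglyMeasurable (.of_forall fun x z hz => ?_)
    ((hΨ.integrable_of_hasCompactSupport hc).norm.const_mul K)
    (.of_forall fun x z _ => ?_)).2
  · rw [norm_mul]
    by_cases hx : x ∈ tsupport Ψ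
    · exact mul_le_mul_of_nonneg_right (hK (x, z) ⟨hx, hz⟩) (norm_nonneg _)
    · simp [image_eq_zero_of_notMem_tsupport hx]
  · have h1 := (hg.differentiable one_ne_zero (pt x z)).hasFDerivAt
    have h2 : HasDerivAt (fun z : ℝ => pt x z) (EuclideanSpace.single (Fin.last d) 1) z := by
      have := ((hasDerivAt_id z).smul_const
        (EuclideanSpace.single (Fin.last d) (1 : ℝ))).const_add (sliceCLM d x)
      rw [one_smul] at this
      exact this
    exact (h1.comp_hasDerivAt z h2).mul_const _

/-- The divergence-free condition turns the vertical derivative of the flux into tangential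
derivatives, which are then moved onto `Ψ`. -/
theorem integral_fderiv_last (hf : ContDiff ℝ (⊤ : ℕ∞) f)
    (hdiv : ∀ x, ∑ i, fderiv ℝ (fun y => f y i) x (EuclideanSpace.single i 1) = 0)
    (hΨ : ContDiff ℝ 1 Ψ) (hc : HasCompactSupport Ψ) (t : ℝ) :
    ∫ x, fderiv ℝ (fun y => f y (Fin.last d)) (pt x t)
        (EuclideanSpace.single (Fin.last d) 1) * Ψ x =
      ∑ i : Fin d, ∫ x, f (pt x t) i.castSucc *
        fderiv ℝ Ψ x (EuclideanSpace.single i 1) := by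
  have hΨc := hΨ.continuous
  have hΨ' : Continuous (fderiv ℝ Ψ) := hΨ.continuous_fderiv one_ne_zero
  have hpt' : Continuous fun x : EuclideanSpace ℝ (Fin d) => pt x t :=
    continuous_pt.comp (by fun_prop : Continuous fun x : EuclideanSpace ℝ (Fin d) => (x, t))
  have hg' : ∀ i, Continuous (fderiv ℝ fun y => f y i) := fun i =>
    (contDiff_coord hf i).continuous_fderiv one_ne_zero
  have hchain : ∀ (i : Fin d) x, HasFDerivAt (fun x => f (pt x t) i.castSucc)
      ((fderiv ℝ (fun y => f y i.castSucc) (pt x t)).comp (sliceCLM d)) x := fun i x => by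
    have h1 := ((contDiff_coord hf i.castSucc).differentiable one_ne_zero (pt x t)).hasFDerivAt
    have h2 : HasFDerivAt (fun x => pt x t) (sliceCLM d) x :=
      (sliceCLM d).hasFDerivAt.add_const _
    exact h1.comp x h2
  have hint : ∀ i : Fin d, Integrable fun x => fderiv ℝ (fun y => f y i.castSucc) (pt x t)
      (EuclideanSpace.single i.castSucc 1) * Ψ x := fun i => by
    refine Continuous.integrable_of_hasCompactSupport ?_ hc.mul_left
    have := hg' i.castSucc
    fun_prop
  have hparts : ∀ i : Fin d, ∫ x, f (pt x t) i.castSucc *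
        fderiv ℝ Ψ x (EuclideanSpace.single i 1) =
      -∫ x, fderiv ℝ (fun y => f y i.castSucc) (pt x t)
        (EuclideanSpace.single i.castSucc 1) * Ψ x := by
    intro i
    have hfd : ∀ x, fderiv ℝ (fun x => f (pt x t) i.castSucc) x (EuclideanSpace.single i 1) =
        fderiv ℝ (fun y => f y i.castSucc) (pt x t) (EuclideanSpace.single i.castSucc 1) := by
      intro x
      rw [(hchain i x).fderiv, ContinuousLinearMap.comp_apply, sliceCLM_single]
    have hfc : Continuous fun x => f (pt x t) i.castSucc :=
      (contDiff_coord hf i.castSucc).continuous.comp hpt'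
    rw [integral_mul_fderiv_eq_neg_fderiv_mul_of_integrable]
    · simp_rw [hfd]
    · simp_rw [hfd]; exact hint i
    · refine Continuous.integrable_of_hasCompactSupport (by fun_prop) ?_
      exact (hc.fderiv_apply ℝ _).mul_left
    · exact (hfc.mul hΨc).integrable_of_hasCompactSupport hc.mul_left
    · exact fun x _ => (hchain i x).differentiableAt
    · exact fun x _ => hΨ.differentiable one_ne_zero x
  simp_rw [hparts]
  rw [Finset.sum_neg_distrib, ← integral_finsetSum _ fun i _ => hint i, ← integral_neg]
  refine integral_congr_ae (.of_forall fun x => ?_)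
  have := hdiv (pt x t)
  rw [Fin.sum_univ_castSucc] at this
  simp only []
  rw [← Finset.sum_mul, ← neg_mul]
  congr 1
  linarith

/-- The flux of `f` through `{x^m = 0}` tested against `Ψ` is bounded by `‖∇Ψ‖_∞ ‖f‖_{L¹}`. -/
theorem abs_flux_le (hf : ContDiff ℝ (⊤ : ℕ∞) f)
    (hdiv : ∀ x, ∑ i, fderiv ℝ (fun y => f y i) x (EuclideanSpace.single i 1) = 0)
    (hfi : Integrable fun x => ‖f x‖) (hΨ : ContDiff ℝ 1 Ψ) (hc : HasCompactSupport Ψ)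
    {M : ℝ} (hM : ∀ x, ‖fderiv ℝ Ψ x‖ ≤ M) :
    |∫ x, f (sliceEmbed d x) (Fin.last d) * Ψ x| ≤ d * M * ∫ x, ‖f x‖ := by
  obtain ⟨N, hN⟩ := hc.exists_bound_of_continuous hΨ.continuous
  have hM0 : 0 ≤ M := (norm_nonneg _).trans (hM 0)
  have hprod : Integrable (fun p : EuclideanSpace ℝ (Fin d) × ℝ => ‖f (pt p.1 p.2)‖)
      (volume.prod volume) := measurePreserving_pt.integrable_comp_of_integrable hfi
  have hJ : ∫ t, ∫ x, ‖f (pt x t)‖ = ∫ x, ‖f x‖ := by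
    rw [← measurePreserving_pt.map_eq, integral_map]
    · exact (integral_prod_symm _ hprod).symm
    · exact measurePreserving_pt.measurable.aemeasurable
    · exact hf.continuous.norm.aestronglyMeasurable
  have ha : Integrable fun t => ∫ x, ‖f (pt x t)‖ := hprod.integral_prod_right
  have hslice := hprod.prod_left_ae
  -- The flux `F` and its derivative are both integrable in `t`, so `F` vanishes at infinity and
  -- `F 0 = -∫_0^∞ F'`.
  set F := fun t => ∫ x, f (pt x t) (Fin.last d) * Ψ x with hF
  have hFd := hasDerivAt_flux (f := f) hf hΨ.continuous hc
  have hcoord : ∀ x i, ‖f x i‖ ≤ ‖f x‖ := fun x i => PiLp.norm_apply_le (f x) i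
  have hFint : Integrable F := by
    refine (ha.const_mul N).mono' ?_ ?_
    · exact (continuous_iff_continuousAt.2 fun t => (hFd t).continuousAt).aestronglyMeasurable
    filter_upwards [hslice] with t ht
    rw [← integral_const_mul]
    refine norm_integral_le_of_norm_le (ht.const_mul N) (.of_forall fun x => ?_)
    rw [norm_mul, mul_comm]
    exact mul_le_mul (hN x) (hcoord _ _) (norm_nonneg _) ((norm_nonneg _).trans (hN x))
  have hbound : ∀ᵐ t, ‖deriv F t‖ ≤ d * M * ∫ x, ‖f (pt x t)‖ := by
    filter_upwards [hslice] with t ht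
    rw [(hFd t).deriv, integral_fderiv_last hf hdiv hΨ hc]
    refine (norm_sum_le _ _).trans ?_
    have : ∀ i ∈ (Finset.univ : Finset (Fin d)), ‖∫ x, f (pt x t) i.castSucc *
        fderiv ℝ Ψ x (EuclideanSpace.single i 1)‖ ≤ M * ∫ x, ‖f (pt x t)‖ := by
      intro i _
      rw [← integral_const_mul]
      refine norm_integral_le_of_norm_le (ht.const_mul M) (.of_forall fun x => ?_)
      rw [norm_mul, mul_comm]
      refine mul_le_mul ?_ (hcoord _ _) (norm_nonneg _) hM0
      refine (ContinuousLinearMap.le_opNorm _ _).trans ?_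
      simpa using hM x
    refine (Finset.sum_le_sum this).trans (le_of_eq ?_)
    simp [mul_assoc]
  have hF'int : Integrable (deriv F) :=
    (ha.const_mul (d * M)).mono' (stronglyMeasurable_deriv F).aestronglyMeasurable hbound
  have hFd' : ∀ t, HasDerivAt F (deriv F t) t := fun t => (hFd t).differentiableAt.hasDerivAt
  have hlim := tendsto_zero_of_hasDerivAt_of_integrableOn_Ioi (a := 0) (fun t _ => hFd' t)
    hF'int.integrableOn hFint.integrableOn
  have hftc := integral_Ioi_of_hasDerivAt_of_tendsto' (a := 0) (fun t _ => hFd' t)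
    hF'int.integrableOn hlim
  have hF0 : F 0 = ∫ x, f (sliceEmbed d x) (Fin.last d) * Ψ x := by
    simp only [hF, pt_zero]
  rw [← hF0, ← abs_neg, ← zero_sub, ← hftc]
  calc |∫ t in Set.Ioi 0, deriv F t| ≤ ∫ t in Set.Ioi (0 : ℝ), d * M * ∫ x, ‖f (pt x t)‖ :=
        norm_integral_le_of_norm_le (ha.const_mul _).integrableOn (ae_restrict_of_ae hbound)
    _ ≤ ∫ t, d * M * ∫ x, ‖f (pt x t)‖ :=
        setIntegral_le_integral (ha.const_mul _) (.of_forall fun t => by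
          have : 0 ≤ ∫ x, ‖f (pt x t)‖ := integral_nonneg fun x => norm_nonneg _
          positivity)
    _ = d * M * ∫ x, ‖f x‖ := by rw [integral_const_mul, hJ]

end Flux

/-! ### Combining the two estimates -/

/-- Optimization in the scale: the choice `s = B / A` balances the two terms. -/
theorem le_of_forall_scale {X A B K₁ K₂ θ : ℝ} (hA : 0 < A) (hB : 0 < B)
    (h : ∀ s, 0 < s → X ≤ A * (K₁ * s ^ θ) + K₂ * s ^ (θ - 1) * B) :
    X ≤ (K₁ + K₂) * A ^ (1 - θ) * B ^ θ := by
  refine (h (B / A) (div_pos hB hA)).trans (le_of_eq ?_)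
  rw [Real.rpow_sub_one (div_pos hB hA).ne', Real.div_rpow hB.le hA.le, Real.rpow_sub hA,
    Real.rpow_one]
  have := (Real.rpow_pos_of_pos hA θ).ne'
  field_simp

/-- Euclidean codimension-one slice estimate for divergence-free vector fields
(Euclidean model of Proposition 4.2), with `m = d + 1 ≥ 2`. -/
theorem stmt_9 (d : ℕ) (hd : 1 ≤ d) :
    ∃ C > (0 : ℝ), ∀ (f : EuclideanSpace ℝ (Fin (d + 1)) → EuclideanSpace ℝ (Fin (d + 1))),
      ContDiff ℝ (⊤ : ℕ∞) f →
      (∀ x, ∑ i, fderiv ℝ (fun y => f y i) x (EuclideanSpace.single i 1) = 0) →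
      Integrable (fun x => ‖f x‖) →
      Integrable (fun x' : EuclideanSpace ℝ (Fin d) => ‖f (sliceEmbed d x')‖) →
      ∀ Φ : EuclideanSpace ℝ (Fin d) → ℝ, ContDiff ℝ (⊤ : ℕ∞) Φ → HasCompactSupport Φ →
      |∫ x', f (sliceEmbed d x') (Fin.last d) * Φ x'| ≤
        C * (∫ x', ‖f (sliceEmbed d x')‖) ^ (1 - 1 / (d + 1 : ℝ)) *
          (∫ x, ‖f x‖) ^ (1 / (d + 1 : ℝ)) *
          ((∫ x', |Φ x'| ^ (d + 1 : ℝ)) ^ (1 / (d + 1 : ℝ)) +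
            (∫ x', ‖fderiv ℝ Φ x'‖ ^ (d + 1 : ℝ)) ^ (1 / (d + 1 : ℝ))) := by
  set c := ((volume.real (Metric.ball (0 : EuclideanSpace ℝ (Fin d)) 1))⁻¹) ^ (1 / (d + 1 : ℝ))
    with hcdef
  have hc0 : 0 < c := by
    refine Real.rpow_pos_of_pos (inv_pos.2 ?_) _
    exact ENNReal.toReal_pos (Metric.measure_ball_pos _ _ one_pos).ne' measure_ball_lt_top.ne
  refine ⟨(d + 1) * c + d * c, by positivity, fun f hf hdiv hfi hsi Φ hΦ hcΦ => ?_⟩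
  have hΦ1 : ContDiff ℝ 1 Φ := hΦ.of_le (by exact_mod_cast le_top)
  set A := ∫ x', ‖f (sliceEmbed d x')‖ with hAdef
  set B := ∫ x, ‖f x‖ with hBdef
  set P := (∫ x', |Φ x'| ^ (d + 1 : ℝ)) ^ (1 / (d + 1 : ℝ)) with hPdef
  set G := (∫ x', ‖fderiv ℝ Φ x'‖ ^ (d + 1 : ℝ)) ^ (1 / (d + 1 : ℝ)) with hGdef
  have hA0 : 0 ≤ A := integral_nonneg fun _ => norm_nonneg _
  have hB0 : 0 ≤ B := integral_nonneg fun _ => norm_nonneg _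
  have hP0 : 0 ≤ P := Real.rpow_nonneg
    (integral_nonneg fun _ => Real.rpow_nonneg (abs_nonneg _) _) _
  have hG0 : 0 ≤ G := Real.rpow_nonneg
    (integral_nonneg fun _ => Real.rpow_nonneg (norm_nonneg _) _) _
  have hcoord : ∀ x, ‖f (sliceEmbed d x) (Fin.last d)‖ ≤ ‖f (sliceEmbed d x)‖ :=
    fun x => PiLp.norm_apply_le _ _
  rcases hA0.eq_or_lt with hA | hA
  · -- `f` vanishes on the slice
    have hz : (fun x' => ‖f (sliceEmbed d x')‖) =ᵐ[volume] 0 :=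
      (integral_eq_zero_iff_of_nonneg (fun _ => norm_nonneg _) hsi).1 hA.symm
    rw [integral_eq_zero_of_ae, abs_zero]
    · positivity
    filter_upwards [hz] with x hx
    have := (hcoord x).trans_eq hx
    simp [norm_le_zero_iff.1 this]
  have hB : 0 < B := by
    -- if `B = 0`, then the continuous field `f` is identically zero, which forces `A = 0`
    refine hB0.lt_of_ne fun h => hA.ne' ?_
    have hz := (integral_eq_zero_iff_of_nonneg (fun _ => norm_nonneg _) hfi).1 h.symm
    have hz' := (Continuous.ae_eq_iff_eq volume hf.continuous.norm continuous_const).1 hz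
    have hz'' : ∀ x, ‖f x‖ = 0 := fun x => congrFun hz' x
    simp [hAdef, hz'']
  have hscont : Continuous fun x' => f (sliceEmbed d x') (Fin.last d) :=
    (contDiff_coord hf (Fin.last d)).continuous.comp (sliceCLM d).continuous
  have key : |∫ x', f (sliceEmbed d x') (Fin.last d) * Φ x'| ≤
      (((d + 1) * (c * G)) + d * (c * G)) * A ^ (1 - 1 / (d + 1 : ℝ)) * B ^ (1 / (d + 1 : ℝ)) := by
    refine le_of_forall_scale hA hB fun s hs => ?_
    have hΨ := contDiff_ballAvg hΦ1 hcΦ s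
    have hcΨ := hasCompactSupport_ballAvg hcΦ s
    have hI1 : Integrable fun x' => f (sliceEmbed d x') (Fin.last d) * Φ x' :=
      (hscont.mul hΦ.continuous).integrable_of_hasCompactSupport hcΦ.mul_left
    have hI2 : Integrable fun x' => f (sliceEmbed d x') (Fin.last d) * ballAvg Φ s x' :=
      (hscont.mul hΨ.continuous).integrable_of_hasCompactSupport hcΨ.mul_left
    have hlow : |∫ x', f (sliceEmbed d x') (Fin.last d) * ballAvg Φ s x'| ≤
        d * (c * G) * s ^ (1 / (d + 1 : ℝ) - 1) * B := by
      refine (abs_flux_le hf hdiv hfi hΨ hcΨ fun x =>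
        norm_fderiv_ballAvg_le hΦ1 hcΦ (p := d + 1) (by simp) hs x).trans (le_of_eq ?_)
      have : -((d : ℝ) / (d + 1)) = 1 / (d + 1 : ℝ) - 1 := by field_simp; ring
      rw [this, ← hcdef, ← hGdef, ← hBdef]
      ring
    have hhigh : |(∫ x', f (sliceEmbed d x') (Fin.last d) * ballAvg Φ s x') -
        ∫ x', f (sliceEmbed d x') (Fin.last d) * Φ x'| ≤
        A * ((d + 1) * (c * G) * s ^ (1 / (d + 1 : ℝ))) := by
      rw [← integral_sub hI2 hI1, hAdef, ← integral_mul_const, ← Real.norm_eq_abs]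
      refine norm_integral_le_of_norm_le (hsi.mul_const _) (.of_forall fun x => ?_)
      rw [← mul_sub, norm_mul]
      exact mul_le_mul (hcoord x) (abs_ballAvg_sub_le hΦ1 hcΦ hs x) (norm_nonneg _)
        (norm_nonneg _)
    rw [abs_le] at hlow hhigh ⊢
    constructor <;> linarith [hlow.1, hlow.2, hhigh.1, hhigh.2]
  refine key.trans ?_
  have hAB : 0 ≤ A ^ (1 - 1 / (d + 1 : ℝ)) * B ^ (1 / (d + 1 : ℝ)) := by positivity
  calc _ = ((d + 1) * c + d * c) * (A ^ (1 - 1 / (d + 1 : ℝ)) * B ^ (1 / (d + 1 : ℝ))) * G := by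
        ring
    _ ≤ ((d + 1) * c + d * c) * (A ^ (1 - 1 / (d + 1 : ℝ)) * B ^ (1 / (d + 1 : ℝ))) * (P + G) :=
        mul_le_mul_of_nonneg_left (by linarith) (by positivity)
    _ = _ := by ring
end

section
/- Bourgain–Brezis duality estimate on ℝ^n (inequality (1.1), the Euclidean case that the paper generalizes): Let n ≥ 2 be an integer. There exists a constant C > 0, depending only on n, such that for every smooth vector field f : ℝ^n → ℝ^n with div f = ∑_{i=1}^n ∂f^i/∂x^i = 0 on ℝ^n and ∫_{ℝ^n} |f| dx < ∞, and for every smooth compactly supported vector field φ : ℝ^n → ℝ^n, | ∫_{ℝ^n} ⟨f(x), φ(x)⟩ dx | ≤ C ( ∫_{ℝ^n} |f(x)| dx ) ( ∫_{ℝ^n} |Dφ(x)|^n dx )^{1/n}, where Dφ(x) denotes the total derivative (Jacobian matrix) of φ at x and |Dφ(x)| its operator (or Hilbert–Schmidt) norm. -/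
/-!
The argument is Van Schaftingen's: slice by hyperplanes and compare the test function with its
averages at a scale chosen slice by slice. Put `n = m + 1`. It suffices to bound `∫ fⁱ φⁱ` for each
`i`. In coordinates `(t, y) ∈ ℝ × ℝ^m` with `t` the `i`-th coordinate, write `g`, `h` and `φ` for
the normal component of the field, its tangential components and `φⁱ`. On the slice at height `t`
two estimates compete:

* trivially, `|∫ g(t, y) ψ(y) dy| ≤ ‖g(t, ·)‖_{L¹} ‖ψ‖_∞`;
* since the field is divergence-free and integrable, the flux `∫ g(t, y) ψ(y) dy` is an integral of
  `h · ∇ψ` over the half space above the slice, hence at most `‖h‖_{L¹} ‖∇ψ‖_∞` (`flux_bound`).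

Let `Φ = φ(t, ·)` and let `Φ_ε` be its average over cubes of side `ε`. By Hölder's inequality, the
average of `|∇Φ|` over a cube of side `s` is at most `s^(-m/n) A`, where `A = ‖∇Φ‖_{Lⁿ(ℝ^m)}`
(`lintegral_cube_le`). So `|∇Φ_ε| ≤ ε^(1/n - 1) A`, and integrating over scales `s ≤ ε` gives
`|Φ - Φ_ε| ≤ n ε^(1/n) A`; no Morrey embedding is needed. Applying the first estimate to `Φ - Φ_ε`
and the second to `Φ_ε` gives `slice_bound`; there the second estimate is applied to each translate
of `Φ`, and the average over translations is taken afterwards, so `Φ_ε` itself never appears. With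
the best `ε` the integral over the slice is at most
`C A(t) ‖g(t, ·)‖_{L¹}^(1 - 1/n) ‖f‖_{L¹}^(1/n)`
(`optimise_scale`), and Hölder's inequality in `t` concludes (`component_bound`).
-/

open MeasureTheory
open scoped RealInnerProductSpace

open Set Filter Topology

/-! ### Averages over cubes -/

theorem lintegral_comp_add_smul {m : ℕ} (D : (Fin m → ℝ) → ENNReal) (hD : Measurable D)
    (y : Fin m → ℝ) {s : ℝ} (hs : 0 < s) :
    ∫⁻ z, D (y + s • z) = ENNReal.ofReal (s ^ (-(m : ℝ))) * ∫⁻ z, D z := by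
  have h1 : ∫⁻ z : Fin m → ℝ, D (y + s • z)
      = ∫⁻ w, D (y + w) ∂(Measure.map (fun z : Fin m → ℝ => s • z) volume) := by
    rw [lintegral_map (by fun_prop) (by fun_prop)]
  rw [h1, Measure.map_addHaar_smul _ hs.ne', lintegral_smul_measure, lintegral_add_left_eq_self]
  simp only [Module.finrank_fintype_fun_eq_card, Fintype.card_fin, smul_eq_mul]
  rw [abs_of_nonneg (by positivity), Real.rpow_neg hs.le, Real.rpow_natCast]

/-- Averages of `D` over cubes of side `s` are controlled by the `L^(m+1)` norm of `D`: this is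
Hölder's inequality on the unit cube followed by a change of variables. -/
theorem lintegral_cube_le {m : ℕ} (hm : 0 < m) (D : (Fin m → ℝ) → ENNReal) (hD : Measurable D)
    (y : Fin m → ℝ) {s : ℝ} (hs : 0 < s) :
    ∫⁻ z in Icc (0 : Fin m → ℝ) 1, D (y + s • z) ≤
      ENNReal.ofReal (s ^ (-(m : ℝ) / (m + 1))) *
        (∫⁻ z, D z ^ ((m : ℝ) + 1)) ^ (1 / ((m : ℝ) + 1)) := by
  have hm' : (0 : ℝ) < m := by exact_mod_cast hm
  have hp : ((m : ℝ) + 1).HolderConjugate (Real.conjExponent ((m : ℝ) + 1)) :=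
    Real.HolderConjugate.conjExponent (by linarith)
  have h := ENNReal.lintegral_mul_le_Lp_mul_Lq (volume.restrict (Icc (0 : Fin m → ℝ) 1)) hp
    (f := fun z => D (y + s • z)) (g := fun _ => 1) (by fun_prop) (by fun_prop)
  simp only [Pi.mul_apply, mul_one, ENNReal.one_rpow, lintegral_const, Measure.restrict_apply_univ,
    Real.volume_Icc_pi] at h
  simp only [Pi.one_apply, Pi.zero_apply, sub_zero, ENNReal.ofReal_one, Finset.prod_const_one,
    ENNReal.one_rpow, mul_one] at h
  refine h.trans ?_
  have h2 : ∫⁻ z in Icc (0 : Fin m → ℝ) 1, D (y + s • z) ^ ((m : ℝ) + 1) ≤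
      ENNReal.ofReal (s ^ (-(m : ℝ))) * ∫⁻ z, D z ^ ((m : ℝ) + 1) := by
    refine (setLIntegral_le_lintegral _ _).trans (le_of_eq ?_)
    exact lintegral_comp_add_smul (fun z => D z ^ ((m : ℝ) + 1)) (by fun_prop) y hs
  refine (ENNReal.rpow_le_rpow h2 (by positivity)).trans (le_of_eq ?_)
  rw [ENNReal.mul_rpow_of_nonneg _ _ (by positivity),
    ENNReal.ofReal_rpow_of_nonneg (by positivity) (by positivity), ← Real.rpow_mul hs.le]
  congr 4
  ring

theorem enorm_sub_le_lintegral {m : ℕ} {Φ : (Fin m → ℝ) → ℝ} (hΦ : ContDiff ℝ 1 Φ)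
    (y : Fin m → ℝ) {z : Fin m → ℝ} (hz : z ∈ Icc (0 : Fin m → ℝ) 1) {ε : ℝ} (hε : 0 < ε) :
    ‖Φ (y + ε • z) - Φ y‖ₑ ≤ ∫⁻ s in Ioc 0 ε, ‖fderiv ℝ Φ (y + s • z)‖ₑ := by
  have hcont : Continuous fun s : ℝ => fderiv ℝ Φ (y + s • z) z := by
    have := hΦ.continuous_fderiv one_ne_zero
    fun_prop
  have hd : ∀ s ∈ uIcc 0 ε,
      HasDerivAt (fun s : ℝ => Φ (y + s • z)) (fderiv ℝ Φ (y + s • z) z) s := by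
    intro s _
    have h1 : HasDerivAt (fun s : ℝ => y + s • z) z s := by
      simpa using ((hasDerivAt_id s).smul_const z).const_add y
    exact ((hΦ.differentiable one_ne_zero _).hasFDerivAt).comp_hasDerivAt s h1
  have h := intervalIntegral.integral_eq_sub_of_hasDerivAt hd (hcont.intervalIntegrable _ _)
  simp only [zero_smul, add_zero] at h
  rw [← h, intervalIntegral.integral_of_le hε.le]
  refine (enorm_integral_le_lintegral_enorm _).trans (lintegral_mono fun s => ?_)
  have hz1 : ‖z‖ ≤ 1 := by
    rw [pi_norm_le_iff_of_nonneg zero_le_one]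
    intro i
    rw [Real.norm_eq_abs, abs_of_nonneg (hz.1 i)]
    exact hz.2 i
  rw [← ofReal_norm, ← ofReal_norm]
  refine ENNReal.ofReal_le_ofReal (((fderiv ℝ Φ (y + s • z)).le_opNorm z).trans ?_)
  exact mul_le_of_le_one_right (norm_nonneg _) hz1

theorem lintegral_Ioc_rpow {m : ℕ} {ε : ℝ} (hε : 0 < ε) :
    ∫⁻ s in Ioc 0 ε, ENNReal.ofReal (s ^ (-(m : ℝ) / (m + 1))) =
      ENNReal.ofReal ((m + 1) * ε ^ (1 / ((m : ℝ) + 1))) := by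
  have hr : -1 < -(m : ℝ) / (m + 1) := by
    rw [lt_div_iff₀ (by positivity)]; linarith
  rw [← ofReal_integral_eq_lintegral_ofReal, ← intervalIntegral.integral_of_le hε.le,
    integral_rpow (Or.inl hr)]
  · have h1 : -(m : ℝ) / (m + 1) + 1 = 1 / ((m : ℝ) + 1) := by field_simp; ring
    rw [h1, Real.zero_rpow (by positivity)]
    congr 1
    field_simp
    simp
  · exact (intervalIntegral.intervalIntegrable_rpow' hr).1
  · filter_upwards [ae_restrict_mem measurableSet_Ioc] with s hs
    exact Real.rpow_nonneg hs.1.le _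

/-! ### The estimate on one slice -/

/-- The estimate on one slice, at an arbitrary scale `ε`. The function `Φ` is compared with its
average over cubes of side `ε`: the error is paid for by `γ`, and the average is tested through
the hypothesis `h`, applied to all translates of `Φ`. -/
theorem slice_bound {m : ℕ} (hm : 0 < m) {γ : (Fin m → ℝ) → ℝ} (hγ : Continuous γ)
    {Φ : (Fin m → ℝ) → ℝ} (hΦ : ContDiff ℝ 1 Φ) (hΦc : HasCompactSupport Φ)
    {U : (Fin m → ℝ) → ENNReal} (hU : Measurable U)
    (h : ∀ w, ‖∫ y, γ y * Φ (y + w)‖ₑ ≤ ∫⁻ y, U y * ‖fderiv ℝ Φ (y + w)‖ₑ)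
    {ε : ℝ} (hε : 0 < ε) :
    ‖∫ y, γ y * Φ y‖ₑ ≤ (∫⁻ z, ‖fderiv ℝ Φ z‖ₑ ^ ((m : ℝ) + 1)) ^ (1 / ((m : ℝ) + 1)) *
      (ENNReal.ofReal ((m + 1) * ε ^ (1 / ((m : ℝ) + 1))) * (∫⁻ y, ‖γ y‖ₑ) +
        ENNReal.ofReal (ε ^ (-(m : ℝ) / (m + 1))) * ∫⁻ y, U y) := by
  set A := (∫⁻ z, ‖fderiv ℝ Φ z‖ₑ ^ ((m : ℝ) + 1)) ^ (1 / ((m : ℝ) + 1)) with hA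
  have hcd : Continuous (fderiv ℝ Φ) := hΦ.continuous_fderiv one_ne_zero
  have hΦ0 := hΦ.continuous
  set Q : Set (Fin m → ℝ) := Icc 0 1 with hQ
  have hQv : volume Q = 1 := by
    rw [hQ, Real.volume_Icc_pi]; simp
  have hint : ∀ w, Integrable fun y => γ y * Φ (y + w) := by
    intro w
    refine Continuous.integrable_of_hasCompactSupport (by fun_prop) ?_
    exact HasCompactSupport.mul_left (hΦc.comp_homeomorph (Homeomorph.addRight w))
  have key : ∀ z ∈ Q, ‖∫ y, γ y * Φ y‖ₑ ≤
      (∫⁻ y, ∫⁻ s in Ioc 0 ε, ‖γ y‖ₑ * ‖fderiv ℝ Φ (y + s • z)‖ₑ) +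
        ∫⁻ y, U y * ‖fderiv ℝ Φ (y + ε • z)‖ₑ := by
    intro z hz
    have e1 : ∫ y, γ y * Φ y = -(∫ y, γ y * (Φ (y + ε • z) - Φ y)) + ∫ y, γ y * Φ (y + ε • z) := by
      have h0 := hint 0
      simp only [add_zero] at h0
      simp only [mul_sub]
      rw [integral_sub (hint _) h0]
      ring
    rw [e1]
    refine (enorm_add_le _ _).trans (add_le_add ?_ (h _))
    rw [enorm_neg]
    refine (enorm_integral_le_lintegral_enorm _).trans (lintegral_mono fun y => ?_)
    rw [enorm_mul, lintegral_const_mul _ (by fun_prop)]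
    exact mul_le_mul_right (enorm_sub_le_lintegral hΦ y hz hε) _
  -- average over the directions `z` in the unit cube, which has volume one
  have h1 : ‖∫ y, γ y * Φ y‖ₑ ≤ ∫⁻ z in Q,
      ((∫⁻ y, ∫⁻ s in Ioc 0 ε, ‖γ y‖ₑ * ‖fderiv ℝ Φ (y + s • z)‖ₑ) +
        ∫⁻ y, U y * ‖fderiv ℝ Φ (y + ε • z)‖ₑ) := by
    calc ‖∫ y, γ y * Φ y‖ₑ = ∫⁻ z in Q, ‖∫ y, γ y * Φ y‖ₑ := by simp [hQv]
      _ ≤ _ := setLIntegral_mono' measurableSet_Icc key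
  refine h1.trans ?_
  rw [lintegral_add_right _ (Measurable.lintegral_prod_right (by fun_prop)), mul_add]
  refine add_le_add ?_ ?_
  · rw [lintegral_lintegral_swap]
    · calc _ ≤ ∫⁻ y, ‖γ y‖ₑ * (ENNReal.ofReal ((m + 1) * ε ^ (1 / ((m : ℝ) + 1))) * A) := by
            refine lintegral_mono fun y => ?_
            rw [lintegral_lintegral_swap (by fun_prop)]
            calc _ ≤ ∫⁻ s in Ioc 0 ε,
                  ‖γ y‖ₑ * (ENNReal.ofReal (s ^ (-(m : ℝ) / (m + 1))) * A) := by
                  refine setLIntegral_mono' measurableSet_Ioc fun s hs => ?_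
                  rw [lintegral_const_mul _ (by fun_prop)]
                  exact mul_le_mul_right
                    (lintegral_cube_le hm (fun z => ‖fderiv ℝ Φ z‖ₑ) (by fun_prop) y hs.1) _
              _ = _ := by
                  rw [lintegral_const_mul _ (by fun_prop), lintegral_mul_const _ (by fun_prop),
                    lintegral_Ioc_rpow hε]
        _ = _ := by
            rw [lintegral_mul_const _ (by fun_prop)]
            ring
    · refine Measurable.aemeasurable ?_
      refine Measurable.lintegral_prod_right' (f := fun q : ((Fin m → ℝ) × (Fin m → ℝ)) × ℝ =>
        ‖γ q.1.2‖ₑ * ‖fderiv ℝ Φ (q.1.2 + q.2 • q.1.1)‖ₑ) ?_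
      fun_prop
  · rw [lintegral_lintegral_swap (by fun_prop)]
    calc _ ≤ ∫⁻ y, U y * (ENNReal.ofReal (ε ^ (-(m : ℝ) / (m + 1))) * A) := by
          refine lintegral_mono fun y => ?_
          rw [lintegral_const_mul _ (by fun_prop)]
          exact mul_le_mul_right
            (lintegral_cube_le hm (fun z => ‖fderiv ℝ Φ z‖ₑ) (by fun_prop) y hε) _
      _ = _ := by
          rw [lintegral_mul_const _ hU]
          ring

/-! ### Flux through hyperplanes -/

/-- The flux of a divergence-free field through a hyperplane, weighted by a test function `ψ`, only
involves `ψ` through its derivative: the divergence theorem in the half space above the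
hyperplane. -/
theorem flux_bound {m : ℕ} {g : ℝ × (Fin m → ℝ) → ℝ} {h : Fin m → ℝ × (Fin m → ℝ) → ℝ}
    (hg : ContDiff ℝ 1 g) (hh : ∀ j, ContDiff ℝ 1 (h j))
    (hgi : Integrable g) (hhi : ∀ j, Integrable (h j))
    (hdiv : ∀ p, fderiv ℝ g p (1, 0) + ∑ j, fderiv ℝ (h j) p (0, Pi.single j 1) = 0)
    {ψ : (Fin m → ℝ) → ℝ} (hψ : ContDiff ℝ 1 ψ) (hψc : HasCompactSupport ψ) (t : ℝ) :
    ‖∫ y, g (t, y) * ψ y‖ₑ ≤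
      ∫⁻ s, ∫⁻ y, (∑ j, ‖h j (s, y)‖ₑ) * ‖fderiv ℝ ψ y‖ₑ := by
  have hψ0 := hψ.continuous
  have hψ1 : Continuous (fderiv ℝ ψ) := hψ.continuous_fderiv one_ne_zero
  have hg0 := hg.continuous
  have hg1 : Continuous (fderiv ℝ g) := hg.continuous_fderiv one_ne_zero
  have hh0 := fun j => (hh j).continuous
  have hh1 : ∀ j, Continuous (fderiv ℝ (h j)) := fun j => (hh j).continuous_fderiv one_ne_zero
  have hψ1c : ∀ j : Fin m, HasCompactSupport fun y => fderiv ℝ ψ y (Pi.single j 1) :=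
    fun j => hψc.fderiv_apply ℝ _
  have hcs : ∀ (a b : (Fin m → ℝ) → ℝ), Continuous a → Continuous b → HasCompactSupport b →
      Integrable fun y => a y * b y := fun a b ha hb hbc =>
    (ha.mul hb).integrable_of_hasCompactSupport hbc.mul_left
  -- differentiation under the integral sign
  have hD : ∀ s, HasDerivAt (fun s => ∫ y, g (s, y) * ψ y)
      (∫ y, fderiv ℝ g (s, y) (1, 0) * ψ y) s := by
    intro s
    obtain ⟨K, hK⟩ :=
      ((isCompact_Icc (a := s - 1) (b := s + 1)).prod hψc).exists_bound_of_continuousOn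
      (f := fun p : ℝ × (Fin m → ℝ) => fderiv ℝ g p (1, 0)) (by fun_prop)
    refine (hasDerivAt_integral_of_dominated_loc_of_deriv_le
      (F := fun s y => g (s, y) * ψ y) (F' := fun s y => fderiv ℝ g (s, y) (1, 0) * ψ y)
      (bound := fun y => |K| * ‖ψ y‖)
      (Icc_mem_nhds (by linarith : s - 1 < s) (by linarith : s < s + 1)) ?_ ?_ ?_ ?_ ?_ ?_).2
    · exact Eventually.of_forall fun x => (by fun_prop : Continuous _).aestronglyMeasurable
    · exact hcs _ _ (by fun_prop) hψ0 hψc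
    · exact (by fun_prop : Continuous _).aestronglyMeasurable
    · refine ae_of_all _ fun y x hx => ?_
      rw [norm_mul]
      by_cases hy : y ∈ tsupport ψ
      · exact mul_le_mul_of_nonneg_right ((hK (x, y) ⟨hx, hy⟩).trans (le_abs_self K))
          (norm_nonneg _)
      · simp [image_eq_zero_of_notMem_tsupport hy]
    · exact (hψ0.integrable_of_hasCompactSupport hψc).norm.const_mul _
    · refine ae_of_all _ fun y x _ => ?_
      have h1 : HasDerivAt (fun x : ℝ => (x, y)) ((1 : ℝ), (0 : Fin m → ℝ)) x :=
        (hasDerivAt_id x).prodMk (hasDerivAt_const x y)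
      exact (((hg.differentiable one_ne_zero _).hasFDerivAt).comp_hasDerivAt x h1).mul_const _
  -- integration by parts in the hyperplane
  have hP : ∀ s, ∫ y, fderiv ℝ g (s, y) (1, 0) * ψ y =
      ∫ y, ∑ j, h j (s, y) * fderiv ℝ ψ y (Pi.single j 1) := by
    intro s
    have hpart : ∀ j : Fin m, ∫ y, h j (s, y) * fderiv ℝ ψ y (Pi.single j 1) =
        -∫ y, fderiv ℝ (h j) (s, y) (0, Pi.single j 1) * ψ y := by
      intro j
      have hdj : ∀ y, HasFDerivAt (fun y => h j (s, y))
          ((fderiv ℝ (h j) (s, y)).comp (ContinuousLinearMap.inr ℝ ℝ (Fin m → ℝ))) y := fun y =>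
        (((hh j).differentiable one_ne_zero _).hasFDerivAt).comp y (hasFDerivAt_prodMk_right s y)
      have e : ∀ y, fderiv ℝ (fun y => h j (s, y)) y (Pi.single j 1) =
          fderiv ℝ (h j) (s, y) (0, Pi.single j 1) := by
        intro y
        rw [(hdj y).fderiv]
        simp
      have := integral_mul_fderiv_eq_neg_fderiv_mul_of_integrable (μ := volume)
        (f := fun y => h j (s, y)) (g := ψ) (v := Pi.single j 1)
        (by simp only [e]; exact hcs _ _ (by fun_prop) hψ0 hψc)
        (hcs _ _ (by fun_prop) (by fun_prop) (hψ1c j))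
        (hcs _ _ (by fun_prop) hψ0 hψc)
        (fun y _ => (hdj y).differentiableAt)
        (fun y _ => hψ.differentiable one_ne_zero y)
      simpa only [e] using this
    rw [integral_finsetSum _ fun j _ => hcs _ _ (by fun_prop) (by fun_prop) (hψ1c j)]
    simp only [hpart]
    rw [Finset.sum_neg_distrib, ← integral_finsetSum _ fun j _ =>
      hcs _ _ (by fun_prop) hψ0 hψc, ← integral_neg]
    refine integral_congr_ae (ae_of_all _ fun y => ?_)
    simp only [← Finset.sum_mul]
    rw [← neg_mul, eq_neg_of_add_eq_zero_left (hdiv (s, y))]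
  have hbdd : ∀ b : (Fin m → ℝ) → ℝ, Continuous b → HasCompactSupport b →
      ∀ a : ℝ × (Fin m → ℝ) → ℝ, Integrable a →
        Integrable (fun p : ℝ × (Fin m → ℝ) => a p * b p.2) (volume.prod volume) := by
    intro b hb hbc a ha
    obtain ⟨K, hK⟩ := hbc.exists_bound_of_continuous hb
    exact ha.mul_bdd (c := K) (by fun_prop) (ae_of_all _ fun p => hK p.2)
  have hG : Integrable fun s => ∫ y, g (s, y) * ψ y :=
    (hbdd ψ hψ0 hψc g hgi).integral_prod_left
  have hG' : Integrable fun s => ∫ y, fderiv ℝ g (s, y) (1, 0) * ψ y := by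
    simp only [hP]
    exact (integrable_finsetSum _ fun j _ =>
      hbdd _ (by fun_prop) (hψ1c j) (h j) (hhi j)).integral_prod_left
  -- the flux and its derivative in the height are integrable, so the flux vanishes at infinity
  have hlim := tendsto_zero_of_hasDerivAt_of_integrableOn_Ioi (a := t) (fun x _ => hD x)
    hG'.integrableOn hG.integrableOn
  have hftc := integral_Ioi_of_hasDerivAt_of_tendsto (a := t)
    (hD t).continuousAt.continuousWithinAt (fun x _ => hD x) hG'.integrableOn hlim
  rw [zero_sub] at hftc
  rw [← enorm_neg, ← hftc]
  refine (enorm_integral_le_lintegral_enorm _).trans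
    ((setLIntegral_le_lintegral _ _).trans (lintegral_mono fun s => ?_))
  rw [hP]
  refine (enorm_integral_le_lintegral_enorm _).trans (lintegral_mono fun y => ?_)
  refine (enorm_sum_le _ _).trans ?_
  rw [Finset.sum_mul]
  refine Finset.sum_le_sum fun j _ => ?_
  rw [enorm_mul]
  refine mul_le_mul_right ?_ _
  rw [← ofReal_norm, ← ofReal_norm]
  refine ENNReal.ofReal_le_ofReal (((fderiv ℝ ψ y).le_opNorm _).trans ?_)
  rw [Pi.norm_single, norm_one, mul_one]

/-! ### Choice of the scale and integration over slices -/

/-- Optimisation of the scale `ε`: a bound by `ε ^ (1 / n) F + ε ^ (1 / n - 1) N` for all `ε`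
yields one by `F ^ (1 - 1 / n) N ^ (1 / n)`, with `n = m + 1`. -/
theorem optimise_scale {m : ℕ} {I A F N : ENNReal}
    (hF0 : F ≠ 0) (hF : F ≠ ⊤) (hN0 : N ≠ 0) (hN : N ≠ ⊤)
    (h : ∀ ε : ℝ, 0 < ε → I ≤ A * (ENNReal.ofReal ((m + 1) * ε ^ (1 / ((m : ℝ) + 1))) * F +
        ENNReal.ofReal (ε ^ (-(m : ℝ) / (m + 1))) * N)) :
    I ≤ ENNReal.ofReal (m + 2) * N ^ (1 / ((m : ℝ) + 1)) *
      (A * F ^ ((m : ℝ) / (m + 1))) := by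
  have hFp : 0 < F.toReal := ENNReal.toReal_pos hF0 hF
  have hNp : 0 < N.toReal := ENNReal.toReal_pos hN0 hN
  -- `ε = N / F` balances the two terms
  have h1 := h (N.toReal / F.toReal) (by positivity)
  refine h1.trans (le_of_eq ?_)
  conv_lhs => rw [← ENNReal.ofReal_toReal hF, ← ENNReal.ofReal_toReal hN]
  conv_rhs => rw [← ENNReal.ofReal_toReal hF, ← ENNReal.ofReal_toReal hN]
  set x := F.toReal
  set y := N.toReal
  rw [ENNReal.toReal_ofReal hFp.le, ENNReal.toReal_ofReal hNp.le,
    ENNReal.ofReal_rpow_of_pos hFp, ENNReal.ofReal_rpow_of_pos hNp,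
    ← ENNReal.ofReal_mul (by positivity), ← ENNReal.ofReal_mul (by positivity),
    ← ENNReal.ofReal_add (by positivity) (by positivity), mul_left_comm,
    ← ENNReal.ofReal_mul (by positivity), ← ENNReal.ofReal_mul (by positivity)]
  congr 2
  have e1 : x = x ^ (1 / ((m : ℝ) + 1)) * x ^ ((m : ℝ) / (m + 1)) := by
    rw [← Real.rpow_add hFp, ← add_div, add_comm 1, div_self (by positivity), Real.rpow_one]
  have e2 : y = y ^ (1 / ((m : ℝ) + 1)) * y ^ ((m : ℝ) / (m + 1)) := by
    rw [← Real.rpow_add hNp, ← add_div, add_comm 1, div_self (by positivity), Real.rpow_one]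
  rw [neg_div, Real.rpow_neg (by positivity), Real.div_rpow hNp.le hFp.le,
    Real.div_rpow hNp.le hFp.le]
  have p1 : 0 < x ^ (1 / ((m : ℝ) + 1)) := by positivity
  have p2 : 0 < x ^ ((m : ℝ) / (m + 1)) := by positivity
  have p3 : 0 < y ^ (1 / ((m : ℝ) + 1)) := by positivity
  have p4 : 0 < y ^ ((m : ℝ) / (m + 1)) := by positivity
  generalize x ^ (1 / ((m : ℝ) + 1)) = a at *
  generalize x ^ ((m : ℝ) / (m + 1)) = b at *
  generalize y ^ (1 / ((m : ℝ) + 1)) = c at *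
  generalize y ^ ((m : ℝ) / (m + 1)) = d at *
  rw [e1, e2]
  field_simp
  ring

/-- The estimate for one component of the field and of the test function, in coordinates
`(t, y) ∈ ℝ × ℝ^m` in which that component is normal to the hyperplanes `t = const`. -/
theorem component_bound {m : ℕ} (hm : 0 < m) {g : ℝ × (Fin m → ℝ) → ℝ}
    {h : Fin m → ℝ × (Fin m → ℝ) → ℝ}
    (hg : ContDiff ℝ 1 g) (hh : ∀ j, ContDiff ℝ 1 (h j))
    (hgi : Integrable g) (hhi : ∀ j, Integrable (h j))
    (hdiv : ∀ p, fderiv ℝ g p (1, 0) + ∑ j, fderiv ℝ (h j) p (0, Pi.single j 1) = 0)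
    {φ : ℝ × (Fin m → ℝ) → ℝ} (hφ : ContDiff ℝ 1 φ) (hφc : HasCompactSupport φ) :
    ‖∫ p, g p * φ p‖ₑ ≤ ENNReal.ofReal (m + 2) * (∫⁻ p, (‖g p‖ₑ + ∑ j, ‖h j p‖ₑ)) *
      (∫⁻ p, ‖fderiv ℝ φ p‖ₑ ^ ((m : ℝ) + 1)) ^ (1 / ((m : ℝ) + 1)) := by
  have hg0 := hg.continuous
  have hφ0 := hφ.continuous
  have hφ1 : Continuous (fderiv ℝ φ) := hφ.continuous_fderiv one_ne_zero
  have hh0 := fun j => (hh j).continuous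
  have hgm : Measurable g := hg0.measurable
  have hhm := fun j => (hh0 j).measurable
  have hm' : (0 : ℝ) < m := by exact_mod_cast hm
  set N := ∫⁻ p, (‖g p‖ₑ + ∑ j, ‖h j p‖ₑ) with hN
  have hgN : ∫⁻ p, ‖g p‖ₑ ≤ N := lintegral_mono fun p => le_self_add
  have hhN : ∫⁻ p, ∑ j, ‖h j p‖ₑ ≤ N := lintegral_mono fun p => le_add_self
  have hNtop : N ≠ ⊤ := by
    rw [hN, lintegral_add_left (by fun_prop), lintegral_finsetSum _ (by fun_prop)]
    exact ENNReal.add_ne_top.2 ⟨hgi.2.ne, ENNReal.sum_ne_top.2 fun j _ => (hhi j).2.ne⟩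
  by_cases hN0 : N = 0
  · have h0 : ∫⁻ p, ‖g p‖ₑ = 0 := le_antisymm (hgN.trans hN0.le) bot_le
    rw [lintegral_eq_zero_iff (by fun_prop)] at h0
    rw [integral_eq_zero_of_ae]
    · simp
    · filter_upwards [h0] with p hp
      simp [enorm_eq_zero.1 hp]
  set F : ℝ → ENNReal := fun t => ∫⁻ y, ‖g (t, y)‖ₑ with hF
  set B : ℝ → ENNReal := fun t =>
    (∫⁻ y, ‖fderiv ℝ φ (t, y)‖ₑ ^ ((m : ℝ) + 1)) ^ (1 / ((m : ℝ) + 1)) with hB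
  have hFm : Measurable F := Measurable.lintegral_prod_right (by fun_prop)
  have hBm : Measurable B := (Measurable.lintegral_prod_right (by fun_prop)).pow_const _
  have hFint : ∫⁻ t, F t = ∫⁻ p, ‖g p‖ₑ := by
    rw [Measure.volume_eq_prod, lintegral_prod _ (by fun_prop)]
  have hFfin : ∀ᵐ t, F t < ⊤ := ae_lt_top hFm
    (hFint.trans_ne (hgN.trans_lt hNtop.lt_top).ne)
  -- tangential components enter only through their integrals over the lines normal to the slices
  set U : (Fin m → ℝ) → ENNReal := fun y => ∫⁻ s, ∑ j, ‖h j (s, y)‖ₑ with hU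
  have hUm : Measurable U := Measurable.lintegral_prod_left (by fun_prop)
  have hUint : ∫⁻ y, U y ≤ N := by
    refine le_trans (le_of_eq ?_) hhN
    rw [Measure.volume_eq_prod, lintegral_prod_symm _ (by fun_prop)]
  have hslice : ∀ t, F t < ⊤ → ‖∫ y, g (t, y) * φ (t, y)‖ₑ ≤
      ENNReal.ofReal (m + 2) * N ^ (1 / ((m : ℝ) + 1)) * (B t * F t ^ ((m : ℝ) / (m + 1))) := by
    intro t ht
    by_cases hF0 : F t = 0
    · rw [hF, lintegral_eq_zero_iff (by fun_prop)] at hF0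
      rw [integral_eq_zero_of_ae]
      · simp
      · filter_upwards [hF0] with p hp
        simp [enorm_eq_zero.1 hp]
    refine optimise_scale hF0 ht.ne hN0 hNtop fun ε hε => ?_
    have hΦ : ContDiff ℝ 1 fun y => φ (t, y) := by fun_prop
    have hΦc : HasCompactSupport fun y => φ (t, y) :=
      HasCompactSupport.intro (hφc.image continuous_snd) fun y hy =>
        image_eq_zero_of_notMem_tsupport fun hty => hy ⟨(t, y), hty, rfl⟩
    have hΦd : ∀ y, ‖fderiv ℝ (fun y => φ (t, y)) y‖ₑ ≤ ‖fderiv ℝ φ (t, y)‖ₑ := by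
      intro y
      have hd : HasFDerivAt (fun y => φ (t, y))
          ((fderiv ℝ φ (t, y)).comp (ContinuousLinearMap.inr ℝ ℝ (Fin m → ℝ))) y :=
        ((hφ.differentiable one_ne_zero _).hasFDerivAt).comp y (hasFDerivAt_prodMk_right t y)
      rw [hd.fderiv, ← ofReal_norm, ← ofReal_norm]
      refine ENNReal.ofReal_le_ofReal ((ContinuousLinearMap.opNorm_comp_le _ _).trans ?_)
      exact mul_le_of_le_one_right (norm_nonneg _) (ContinuousLinearMap.norm_inr_le_one _ _ _)
    have hb := slice_bound hm (γ := fun y => g (t, y)) (by fun_prop) hΦ hΦc hUm ?_ hε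
    · refine hb.trans ?_
      refine mul_le_mul' (ENNReal.rpow_le_rpow (lintegral_mono fun y =>
        ENNReal.rpow_le_rpow (hΦd y) (by positivity)) (by positivity)) ?_
      gcongr
    · intro w
      have hw := flux_bound hg hh hgi hhi hdiv (ψ := fun y => φ (t, y + w)) (by fun_prop)
        (hΦc.comp_homeomorph (Homeomorph.addRight w)) t
      refine hw.trans (le_of_eq ?_)
      have e : ∀ y, fderiv ℝ (fun y => φ (t, y + w)) y = fderiv ℝ (fun y => φ (t, y)) (y + w) :=
        fun y => fderiv_comp_add_right (f := fun y => φ (t, y)) w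
      have hc : Continuous (fderiv ℝ fun y => φ (t, y)) := hΦ.continuous_fderiv one_ne_zero
      simp only [e]
      rw [lintegral_lintegral_swap (by fun_prop)]
      refine lintegral_congr fun y => ?_
      rw [lintegral_mul_const _ (by fun_prop)]
  have hint : Integrable (fun p : ℝ × (Fin m → ℝ) => g p * φ p) (volume.prod volume) :=
    (hg0.mul hφ0).integrable_of_hasCompactSupport hφc.mul_left
  have hp : ((m : ℝ) + 1).HolderConjugate (Real.conjExponent ((m : ℝ) + 1)) :=
    Real.HolderConjugate.conjExponent (by linarith)
  have hq : Real.conjExponent ((m : ℝ) + 1) = ((m : ℝ) + 1) / m := by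
    simp [Real.conjExponent]
  have hH := ENNReal.lintegral_mul_le_Lp_mul_Lq volume hp (f := B)
    (g := fun t => F t ^ ((m : ℝ) / (m + 1))) (by fun_prop) (by fun_prop)
  simp only [Pi.mul_apply, hq, ← ENNReal.rpow_mul] at hH
  have e1 : (m : ℝ) / (m + 1) * ((m + 1) / m) = 1 := by field_simp
  have e2 : 1 / ((m + 1) / (m : ℝ)) = m / (m + 1) := by field_simp
  simp only [e1, e2, ENNReal.rpow_one] at hH
  have hBint : ∫⁻ t, B t ^ ((m : ℝ) + 1) = ∫⁻ p, ‖fderiv ℝ φ p‖ₑ ^ ((m : ℝ) + 1) := by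
    rw [Measure.volume_eq_prod, lintegral_prod _ (by fun_prop)]
    refine lintegral_congr fun t => ?_
    rw [hB, ← ENNReal.rpow_mul, one_div_mul_cancel (by positivity), ENNReal.rpow_one]
  rw [hBint] at hH
  set D := (∫⁻ p, ‖fderiv ℝ φ p‖ₑ ^ ((m : ℝ) + 1)) ^ (1 / ((m : ℝ) + 1))
  calc ‖∫ p, g p * φ p‖ₑ = ‖∫ t, ∫ y, g (t, y) * φ (t, y)‖ₑ := by
        rw [Measure.volume_eq_prod, integral_prod _ hint]
    _ ≤ ∫⁻ t, ‖∫ y, g (t, y) * φ (t, y)‖ₑ := enorm_integral_le_lintegral_enorm _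
    _ ≤ ∫⁻ t, ENNReal.ofReal (m + 2) * N ^ (1 / ((m : ℝ) + 1)) *
          (B t * F t ^ ((m : ℝ) / (m + 1))) := by
        refine lintegral_mono_ae ?_
        filter_upwards [hFfin] with t ht using hslice t ht
    _ = ENNReal.ofReal (m + 2) * N ^ (1 / ((m : ℝ) + 1)) *
          ∫⁻ t, B t * F t ^ ((m : ℝ) / (m + 1)) := lintegral_const_mul _ (by fun_prop)
    _ ≤ ENNReal.ofReal (m + 2) * N ^ (1 / ((m : ℝ) + 1)) *
          (D * N ^ ((m : ℝ) / (m + 1))) := by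
        gcongr
        refine hH.trans ?_
        gcongr
        exact hFint.trans_le hgN
    _ = ENNReal.ofReal (m + 2) * (N ^ (1 / ((m : ℝ) + 1)) * N ^ ((m : ℝ) / (m + 1))) * D := by
        ring
    _ = _ := by
        rw [← ENNReal.rpow_add_of_nonneg _ _ (by positivity) (by positivity), ← add_div,
          add_comm 1, div_self (by positivity), ENNReal.rpow_one]

/-! ### Transfer to Euclidean space -/

/-- The linear coordinates `(t, y) ↦ (y₀, …, t, …, y_{m-1})` on `ℝ^(m+1)`, with
`t` in position `i`. -/
noncomputable def insertCoord {m : ℕ} (i : Fin (m + 1)) :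
    (ℝ × (Fin m → ℝ)) ≃L[ℝ] EuclideanSpace ℝ (Fin (m + 1)) :=
  LinearEquiv.toContinuousLinearEquiv
    { toFun := fun p => WithLp.toLp 2 (i.insertNth p.1 p.2 : Fin (m + 1) → ℝ)
      invFun := fun x => (x i, fun j => x (i.succAbove j))
      map_add' := fun p q => by
        ext k
        refine Fin.succAboveCases i ?_ (fun j => ?_) k <;> simp
      map_smul' := fun c p => by
        ext k
        refine Fin.succAboveCases i ?_ (fun j => ?_) k <;> simp
      left_inv := fun p => by simp
      right_inv := fun x => by
        ext k
        refine Fin.succAboveCases i ?_ (fun j => ?_) k <;> simp }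

/-- The operator norm of `insertCoord i`. It exceeds `1` when `m > 0`, since the
source carries the sup norm. -/
noncomputable def insertNorm {m : ℕ} (i : Fin (m + 1)) : ℝ :=
  ‖(insertCoord i : (ℝ × (Fin m → ℝ)) →L[ℝ] EuclideanSpace ℝ (Fin (m + 1)))‖

theorem insertCoord_apply {m : ℕ} (i : Fin (m + 1)) (p : ℝ × (Fin m → ℝ)) :
    insertCoord i p = WithLp.toLp 2 (i.insertNth p.1 p.2 : Fin (m + 1) → ℝ) := rfl

theorem insertCoord_normal {m : ℕ} (i : Fin (m + 1)) :
    insertCoord i ((1 : ℝ), (0 : Fin m → ℝ)) = EuclideanSpace.single i 1 := by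
  ext k
  refine Fin.succAboveCases i ?_ (fun j => ?_) k <;> simp [insertCoord_apply]

theorem insertCoord_tangent {m : ℕ} (i : Fin (m + 1)) (j : Fin m) :
    insertCoord i ((0 : ℝ), (Pi.single j 1 : Fin m → ℝ)) =
      EuclideanSpace.single (i.succAbove j) 1 := by
  ext k
  refine Fin.succAboveCases i ?_ (fun l => ?_) k
  · simp [insertCoord_apply]
  · simp [insertCoord_apply, Pi.single_apply]

theorem measurePreserving_insertCoord {m : ℕ} (i : Fin (m + 1)) :
    MeasurePreserving (insertCoord i) := by
  have h1 := (volume_preserving_piFinSuccAbove (fun _ : Fin (m + 1) => ℝ) i).symm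
  exact (PiLp.volume_preserving_toLp (Fin (m + 1))).comp h1

theorem component_bound_euclidean {m : ℕ} (hm : 0 < m)
    {f : EuclideanSpace ℝ (Fin (m + 1)) → EuclideanSpace ℝ (Fin (m + 1))}
    (hf : ContDiff ℝ 1 f)
    (hdiv : ∀ x, ∑ i, fderiv ℝ (fun y => f y i) x (EuclideanSpace.single i 1) = 0)
    (hfi : Integrable (fun x => ‖f x‖))
    {φ : EuclideanSpace ℝ (Fin (m + 1)) → EuclideanSpace ℝ (Fin (m + 1))}
    (hφ : ContDiff ℝ 1 φ) (hφc : HasCompactSupport φ) (i : Fin (m + 1)) :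
    |∫ x, f x i * φ x i| ≤
      ((m + 2) * (m + 1) * insertNorm i) * (∫ x, ‖f x‖) *
        (∫ x, ‖fderiv ℝ φ x‖ ^ ((m : ℝ) + 1)) ^ (1 / ((m : ℝ) + 1)) := by
  set T := insertCoord (m := m) i with hT
  let L : (ℝ × (Fin m → ℝ)) →L[ℝ] EuclideanSpace ℝ (Fin (m + 1)) := T
  have hK : insertNorm i = ‖L‖ := rfl
  rw [hK]
  have hTm : MeasurePreserving T := measurePreserving_insertCoord i
  have hTe : MeasurableEmbedding T := T.toHomeomorph.measurableEmbedding
  have hf0 := hf.continuous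
  have hφ1 : Continuous (fderiv ℝ φ) := hφ.continuous_fderiv one_ne_zero
  have hfk : ∀ k, ContDiff ℝ 1 fun x => f x k := fun k => by fun_prop
  have hfki : ∀ k, Integrable fun x => f x k := fun k =>
    hfi.mono' (hfk k).continuous.aestronglyMeasurable
      (ae_of_all _ fun x => PiLp.norm_apply_le (f x) k)
  have hchain : ∀ k p v, fderiv ℝ (fun p => f (T p) k) p v =
      fderiv ℝ (fun x => f x k) (T p) (T v) := by
    intro k p v
    have h1 : HasFDerivAt (fun p => f (T p) k) ((fderiv ℝ (fun x => f x k) (T p)).comp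
        L) p :=
      (((hfk k).differentiable one_ne_zero _).hasFDerivAt).comp p T.hasFDerivAt
    rw [h1.fderiv]
    rfl
  have hφd : ∀ p, ‖fderiv ℝ (fun p => φ (T p) i) p‖ₑ ≤
      ‖L‖ₑ * ‖fderiv ℝ φ (T p)‖ₑ := by
    intro p
    have h1 : HasFDerivAt (fun p => φ (T p) i) ((EuclideanSpace.proj i).comp
        ((fderiv ℝ φ (T p)).comp L)) p :=
      (EuclideanSpace.proj (𝕜 := ℝ) i).hasFDerivAt.comp p
        (((hφ.differentiable one_ne_zero _).hasFDerivAt).comp p T.hasFDerivAt)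
    rw [h1.fderiv, ← ofReal_norm, ← ofReal_norm, ← ofReal_norm,
      ← ENNReal.ofReal_mul (norm_nonneg _)]
    refine ENNReal.ofReal_le_ofReal (ContinuousLinearMap.opNorm_le_bound _ (by positivity) ?_)
    intro v
    calc ‖fderiv ℝ φ (T p) (T v) i‖ ≤ ‖fderiv ℝ φ (T p) (T v)‖ := PiLp.norm_apply_le _ i
      _ ≤ ‖fderiv ℝ φ (T p)‖ * ‖T v‖ := ContinuousLinearMap.le_opNorm _ _
      _ ≤ ‖fderiv ℝ φ (T p)‖ * (‖L‖ * ‖v‖) := by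
        gcongr
        exact ContinuousLinearMap.le_opNorm L v
      _ = _ := by ring
  have hcore := component_bound hm (g := fun p => f (T p) i)
    (h := fun j p => f (T p) (i.succAbove j)) (φ := fun p => φ (T p) i)
    ((hfk i).comp T.contDiff) (fun j => (hfk _).comp T.contDiff)
    ((hTm.integrable_comp_emb hTe).2 (hfki i)) (fun j => (hTm.integrable_comp_emb hTe).2 (hfki _))
    (fun p => by
      have h0 := hdiv (T p)
      rw [Fin.sum_univ_succAbove _ i, ← insertCoord_normal] at h0
      simp only [← insertCoord_tangent] at h0
      simp only [hchain]
      exact h0)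
    ((by fun_prop : ContDiff ℝ 1 fun x => φ x i).comp T.contDiff)
    ((hφc.comp_left (g := fun v : EuclideanSpace ℝ (Fin (m + 1)) => v i) rfl).comp_homeomorph
      T.toHomeomorph)
  have hI : ∫ p, f (T p) i * φ (T p) i = ∫ x, f x i * φ x i :=
    hTm.integral_comp hTe (fun x => f x i * φ x i)
  have hN : ∫⁻ p, (‖f (T p) i‖ₑ + ∑ j, ‖f (T p) (i.succAbove j)‖ₑ) ≤
      ENNReal.ofReal (m + 1) * ENNReal.ofReal (∫ x, ‖f x‖) := by
    have e : ∀ p, ‖f (T p) i‖ₑ + ∑ j, ‖f (T p) (i.succAbove j)‖ₑ = ∑ k, ‖f (T p) k‖ₑ :=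
      fun p => (Fin.sum_univ_succAbove (fun k => ‖f (T p) k‖ₑ) i).symm
    simp only [e]
    rw [hTm.lintegral_comp_emb hTe (fun x => ∑ k, ‖f x k‖ₑ),
      ofReal_integral_eq_lintegral_ofReal hfi (ae_of_all _ fun x => norm_nonneg _),
      ← lintegral_const_mul _ (by fun_prop)]
    refine lintegral_mono fun x => ?_
    calc ∑ k, ‖f x k‖ₑ ≤ ∑ _k : Fin (m + 1), ENNReal.ofReal ‖f x‖ := by
          refine Finset.sum_le_sum fun k _ => ?_
          rw [← ofReal_norm]
          exact ENNReal.ofReal_le_ofReal (PiLp.norm_apply_le _ k)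
      _ = ENNReal.ofReal (m + 1) * ENNReal.ofReal ‖f x‖ := by
          rw [Finset.sum_const, Finset.card_univ, Fintype.card_fin, nsmul_eq_mul,
            ← ENNReal.ofReal_natCast]
          push_cast
          rfl
  have hDi : Integrable fun x => ‖fderiv ℝ φ x‖ ^ ((m : ℝ) + 1) := by
    refine Continuous.integrable_of_hasCompactSupport ?_ ?_
    · exact hφ1.norm.rpow_const fun _ => Or.inr (by positivity)
    · exact (hφc.fderiv ℝ).comp_left (g := fun L => ‖L‖ ^ ((m : ℝ) + 1))
        (by simp [Real.zero_rpow (by positivity : (m : ℝ) + 1 ≠ 0)])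
  have hD : (∫⁻ p, ‖fderiv ℝ (fun p => φ (T p) i) p‖ₑ ^ ((m : ℝ) + 1)) ^ (1 / ((m : ℝ) + 1)) ≤
      ENNReal.ofReal (‖L‖ *
        (∫ x, ‖fderiv ℝ φ x‖ ^ ((m : ℝ) + 1)) ^ (1 / ((m : ℝ) + 1))) := by
    have h1 : ∫⁻ p, ‖fderiv ℝ (fun p => φ (T p) i) p‖ₑ ^ ((m : ℝ) + 1) ≤
        ‖L‖ₑ ^ ((m : ℝ) + 1) *
          ENNReal.ofReal (∫ x, ‖fderiv ℝ φ x‖ ^ ((m : ℝ) + 1)) := by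
      rw [ofReal_integral_eq_lintegral_ofReal hDi (ae_of_all _ fun x => by positivity),
        ← lintegral_const_mul _ (by fun_prop),
        ← hTm.lintegral_comp_emb hTe]
      refine lintegral_mono fun p => ?_
      rw [← ENNReal.ofReal_rpow_of_nonneg (norm_nonneg _) (by positivity), ofReal_norm,
        ← ENNReal.mul_rpow_of_nonneg _ _ (by positivity)]
      exact ENNReal.rpow_le_rpow (hφd p) (by positivity)
    refine (ENNReal.rpow_le_rpow h1 (by positivity)).trans (le_of_eq ?_)
    rw [ENNReal.mul_rpow_of_nonneg _ _ (by positivity), ← ENNReal.rpow_mul,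
      mul_one_div_cancel (by positivity), ENNReal.rpow_one, ENNReal.ofReal_mul (norm_nonneg _),
      ofReal_norm, ENNReal.ofReal_rpow_of_nonneg (integral_nonneg fun x => by positivity)
        (by positivity)]
  rw [hI] at hcore
  have hfin := hcore.trans (mul_le_mul' (mul_le_mul' le_rfl hN) hD)
  have hf_nonneg : 0 ≤ ∫ x, ‖f x‖ := integral_nonneg fun x => norm_nonneg _
  rw [← ENNReal.ofReal_mul (by positivity), ← ENNReal.ofReal_mul (by positivity),
    ← ENNReal.ofReal_mul (by positivity), ← ofReal_norm, Real.norm_eq_abs,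
    ENNReal.ofReal_le_ofReal_iff (mul_nonneg (by positivity) (mul_nonneg (by positivity)
      (Real.rpow_nonneg (integral_nonneg fun x => by positivity) _)))] at hfin
  refine hfin.trans (le_of_eq ?_)
  ring

/-- Bourgain–Brezis duality estimate on ℝ^n (inequality (1.1)): for divergence-free
`f ∈ L¹` and smooth compactly supported `φ`,
`|∫ ⟨f, φ⟩| ≤ C ‖f‖_{L¹} ‖Dφ‖_{Lⁿ}`. -/
theorem stmt_10 (n : ℕ) (hn : 2 ≤ n) :
    ∃ C > (0 : ℝ), ∀ (f : EuclideanSpace ℝ (Fin n) → EuclideanSpace ℝ (Fin n)),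
      ContDiff ℝ (⊤ : ℕ∞) f →
      (∀ x, ∑ i, fderiv ℝ (fun y => f y i) x (EuclideanSpace.single i 1) = 0) →
      Integrable (fun x => ‖f x‖) →
      ∀ φ : EuclideanSpace ℝ (Fin n) → EuclideanSpace ℝ (Fin n),
        ContDiff ℝ (⊤ : ℕ∞) φ → HasCompactSupport φ →
        |∫ x, ⟪f x, φ x⟫| ≤
          C * (∫ x, ‖f x‖) * (∫ x, ‖fderiv ℝ φ x‖ ^ (n : ℝ)) ^ (1 / (n : ℝ)) := by
  obtain ⟨m, rfl⟩ : ∃ m, n = m + 1 := ⟨n - 1, by omega⟩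
  have hm : 0 < m := by omega
  set K : Fin (m + 1) → ℝ := fun i =>
    (m + 2) * (m + 1) * insertNorm i with hK
  have hK0 : 0 ≤ ∑ i, K i := Finset.sum_nonneg fun i _ =>
    mul_nonneg (by positivity) (norm_nonneg _)
  refine ⟨∑ i, K i + 1, by linarith, fun f hf hdiv hfi φ hφ hφc => ?_⟩
  have hf1 : ContDiff ℝ 1 f := hf.of_le (by exact_mod_cast le_top)
  have hφ1 : ContDiff ℝ 1 φ := hφ.of_le (by exact_mod_cast le_top)
  have hf0 := hf1.continuous
  have hφ0 := hφ1.continuous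
  have hsum : ∫ x, ⟪f x, φ x⟫ = ∑ i, ∫ x, f x i * φ x i := by
    rw [← integral_finsetSum]
    · refine integral_congr_ae (ae_of_all _ fun x => ?_)
      simp [PiLp.inner_apply, mul_comm]
    · intro i _
      refine Continuous.integrable_of_hasCompactSupport (by fun_prop) ?_
      exact (hφc.comp_left (g := fun v : EuclideanSpace ℝ (Fin (m + 1)) => v i) rfl).mul_left
  rw [hsum]
  push_cast
  set a := ∫ x, ‖f x‖ with ha
  set b := (∫ x, ‖fderiv ℝ φ x‖ ^ ((m : ℝ) + 1)) ^ (1 / ((m : ℝ) + 1)) with hb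
  have ha0 : 0 ≤ a := integral_nonneg fun x => norm_nonneg _
  have hb0 : 0 ≤ b := Real.rpow_nonneg (integral_nonneg fun x => by positivity) _
  calc |∑ i, ∫ x, f x i * φ x i| ≤ ∑ i, |∫ x, f x i * φ x i| := Finset.abs_sum_le_sum_abs _ _
    _ ≤ ∑ i, K i * a * b := Finset.sum_le_sum fun i _ =>
        component_bound_euclidean hm hf1 hdiv hfi hφ1 hφc i
    _ = (∑ i, K i) * a * b := by rw [Finset.sum_mul, Finset.sum_mul]
    _ ≤ (∑ i, K i + 1) * a * b := by
        gcongr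
        linarith
end
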